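/- arXiv:2104.04428 — 9 statements merged into one kernel-verified Lean document; each statement's English description precedes it below -/
import Mathlib

section
/- Let K be a field, R = K[x_1, ..., x_d] a polynomial ring, and G a finite group acting linearly on R. Let S = K[x_1, ..., x_d, y_1, ..., y_d] and let I_G = ⋂_{g ∈ G} (y_1 - g(x_1), ..., y_d - g(x_d)) be the Derksen ideal in S. Then for every n ≥ 1, the n-th symbolic power of I_G satisfies I_G^{(n)} = ⋂_{g ∈ G} (y_1 - g(x_1), ..., y_d - g(x_d))^n. -/
/-!
Write `P g` for the component `(y₁ - g(x₁), …, y_d - g(x_d))`. The proof rests on three facts.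

* The substitution `yᵢ ↦ yᵢ + g(xᵢ)` identifies `S` with `R[y₁, …, y_d]` and carries `P g` to the
  ideal of the variables. Membership in the `n`-th power of that ideal says that the order (lowest
  total degree in `y`) is at least `n`, and the order is additive because `R` is a domain. Hence
  `P g` is prime, and `s * f ∈ P g ^ n` with `s ∉ P g` forces `f ∈ P g ^ n`.
* If `P g ≤ P h`, then substituting `yᵢ = h(xᵢ)` in `yᵢ - g(xᵢ)` gives `g(xᵢ) = h(xᵢ)`, so
  `P g = P h`. Thus distinct components are incomparable.
* For a finite intersection `I` of pairwise incomparable primes, the associated primes of `A ⧸ I`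
  are exactly these primes. Choosing `s ∉ P i` in all the primes different from `P i`, one has
  `s ^ n * P i ^ n ≤ I ^ n`, so the contraction of `I ^ n A_{P i}` to `A` contains `P i ^ n`; the
  reverse inclusion is the primary property above.
-/

open MvPolynomial

/-- The `n`-th symbolic power of an ideal `I`:
`I^{(n)} = ⋂_{p ∈ Ass(A/I)} (Iⁿ A_p ∩ A)`. -/
noncomputable def symbolicPower {A : Type*} [CommRing A] (I : Ideal A) (n : ℕ) : Ideal A :=
  ⨅ (p : Ideal A) (hp : p ∈ associatedPrimes A (A ⧸ I)),
    haveI : p.IsPrime := hp.isPrime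
    Ideal.comap (algebraMap A (Localization.AtPrime p))
      (Ideal.map (algebraMap A (Localization.AtPrime p)) (I ^ n))

/-- The component `(y₁ - g(x₁), …, y_d - g(x_d))` of the Derksen ideal, in
`S = K[x₁, …, x_d, y₁, …, y_d]`, where the `x`-variables are indexed by `Sum.inl`
and the `y`-variables by `Sum.inr`. -/
noncomputable def derksenComponent (K : Type*) [Field K] (d : ℕ) {G : Type*} [Group G]
    [MulSemiringAction G (MvPolynomial (Fin d) K)] (g : G) :
    Ideal (MvPolynomial (Fin d ⊕ Fin d) K) :=
  Ideal.span (Set.range fun i : Fin d =>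
    X (Sum.inr i) - rename Sum.inl (g • (X i : MvPolynomial (Fin d) K)))

/-- The Derksen ideal `I_G = ⋂_{g ∈ G} (y₁ - g(x₁), …, y_d - g(x_d))`. -/
noncomputable def derksenIdeal (K : Type*) [Field K] (d : ℕ) (G : Type*) [Group G]
    [MulSemiringAction G (MvPolynomial (Fin d) K)] :
    Ideal (MvPolynomial (Fin d ⊕ Fin d) K) :=
  ⨅ g : G, derksenComponent K d g

/-! ### Finite intersections of incomparable primes -/

/-- The annihilator of the class of `x` modulo `⨅ i, P i` is the intersection of the primes `P i`
not containing `x`. -/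
lemma mem_colon_mk_iInf {A ι : Type*} [CommRing A] {P : ι → Ideal A} (hP : ∀ i, (P i).IsPrime) (a x : A) :
    a ∈ (⊥ : Submodule A (A ⧸ ⨅ i, P i)).colon {Ideal.Quotient.mk (⨅ i, P i) x} ↔
      ∀ i, x ∉ P i → a ∈ P i := by
  rw [Submodule.mem_colon_singleton, Submodule.mem_bot, ← Ideal.Quotient.mk_eq_mk,
    ← Submodule.Quotient.mk_smul, Ideal.Quotient.mk_eq_mk, Ideal.Quotient.eq_zero_iff_mem,
    smul_eq_mul, Ideal.mem_iInf]
  refine forall_congr' fun i => ?_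
  have := (hP i).mul_mem_iff_mem_or_mem (x := a) (y := x)
  tauto

section FiniteIntersection

variable {A ι : Type*} [CommRing A] [Finite ι] {P : ι → Ideal A}

/-- Each of finitely many incomparable primes can be separated from the others by one element. -/
lemma exists_notMem_forall_mem_of_incomparable (hP : ∀ i, (P i).IsPrime)
    (hle : ∀ i j, P i ≤ P j → P i = P j) (i : ι) :
    ∃ s, s ∉ P i ∧ ∀ j, P j ≠ P i → s ∈ P j := by
  classical
  cases nonempty_fintype ι
  have h : ¬ (Finset.univ.filter fun j => P j ≠ P i).inf P ≤ P i := by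
    intro h
    obtain ⟨j, hj, hji⟩ := (hP i).inf_le'.1 h
    exact (Finset.mem_filter.1 hj).2 (hle _ _ hji)
  obtain ⟨s, hs, hsi⟩ := SetLike.not_le_iff_exists.1 h
  refine ⟨s, hsi, fun j hj => ?_⟩
  exact (Finset.inf_le (f := P) (Finset.mem_filter.2 ⟨Finset.mem_univ j, hj⟩)) hs

lemma mem_associatedPrimes_quotient_iInf_iff [IsNoetherianRing A] (hP : ∀ i, (P i).IsPrime)
    (hle : ∀ i j, P i ≤ P j → P i = P j) (p : Ideal A) :
    p ∈ associatedPrimes A (A ⧸ ⨅ i, P i) ↔ ∃ i, p = P i := by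
  classical
  cases nonempty_fintype ι
  rw [AssociatedPrimes.mem_iff, isAssociatedPrime_iff]
  constructor
  · rintro ⟨hp, x, hx⟩
    obtain ⟨x, rfl⟩ := Ideal.Quotient.mk_surjective x
    have hmem : ∀ a, a ∈ p ↔ ∀ i, x ∉ P i → a ∈ P i := fun a => by
      rw [hx]; exact mem_colon_mk_iInf hP a x
    -- `p` is the intersection of the `P i` not containing `x`; being prime, it contains one.
    have h : (Finset.univ.filter fun i => x ∉ P i).inf P ≤ p := by
      intro a ha
      rw [hmem]
      intro i hi
      exact (Finset.inf_le (f := P) (Finset.mem_filter.2 ⟨Finset.mem_univ i, hi⟩)) ha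
    obtain ⟨i, hi, hip⟩ := hp.inf_le'.1 h
    exact ⟨i, le_antisymm (fun a ha => (hmem a).1 ha i (Finset.mem_filter.1 hi).2) hip⟩
  · rintro ⟨i, rfl⟩
    obtain ⟨s, hsi, hs⟩ := exists_notMem_forall_mem_of_incomparable hP hle i
    refine ⟨hP i, Ideal.Quotient.mk _ s, ?_⟩
    ext a
    rw [mem_colon_mk_iInf hP]
    constructor
    · intro ha j hj
      have : P j = P i := by
        by_contra h
        exact hj (hs j h)
      rwa [this]
    · intro h
      exact h i hsi

/-- If the `n`-th powers of finitely many incomparable primes are primary, then the `n`-th symbolic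
power of the intersection of these primes is the intersection of their `n`-th powers. -/
lemma symbolicPower_iInf_of_incomparable [IsNoetherianRing A] (hP : ∀ i, (P i).IsPrime)
    (hle : ∀ i j, P i ≤ P j → P i = P j) (n : ℕ)
    (hprim : ∀ i s f, s ∉ P i → s * f ∈ P i ^ n → f ∈ P i ^ n) :
    symbolicPower (⨅ i, P i) n = ⨅ i, P i ^ n := by
  have key : ∀ i f, (∃ m ∈ (P i).primeCompl, m * f ∈ (⨅ i, P i) ^ n) ↔ f ∈ P i ^ n := by
    intro i f
    constructor
    · rintro ⟨m, hm, hmf⟩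
      exact hprim i m f hm (Ideal.pow_right_mono (iInf_le P i) n hmf)
    · intro hf
      obtain ⟨s, hsi, hs⟩ := exists_notMem_forall_mem_of_incomparable hP hle i
      refine ⟨s ^ n, fun h => hsi ((hP i).mem_of_pow_mem n h), ?_⟩
      have hsub : Ideal.span {s} * P i ≤ ⨅ i, P i := by
        refine le_iInf fun j => ?_
        by_cases hj : P j = P i
        · rw [hj]
          exact Ideal.mul_le_right
        · exact Ideal.mul_le_right.trans' (le_of_eq (mul_comm _ _)) |>.trans
            ((Ideal.span_singleton_le_iff_mem _).2 (hs j hj))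
      have := Ideal.pow_right_mono hsub n
      rw [mul_pow, Ideal.span_singleton_pow] at this
      exact this (Ideal.mul_mem_mul (Ideal.mem_span_singleton_self _) hf)
  ext f
  simp only [symbolicPower, Ideal.mem_iInf]
  constructor
  · intro h i
    have hi := (mem_associatedPrimes_quotient_iInf_iff hP hle (P i)).2 ⟨i, rfl⟩
    have := h (P i) hi
    have hPi := hP i
    rw [Ideal.mem_comap,
      IsLocalization.algebraMap_mem_map_algebraMap_iff (P i).primeCompl] at this
    exact (key i f).1 this
  · intro h p hp
    obtain ⟨i, rfl⟩ := (mem_associatedPrimes_quotient_iInf_iff hP hle p).1 hp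
    have hPi := hP i
    rw [Ideal.mem_comap,
      IsLocalization.algebraMap_mem_map_algebraMap_iff (P i).primeCompl]
    exact (key i f).2 (h i)

end FiniteIntersection

/-! ### Powers of the ideal of the variables -/

section Variables

variable {σ R : Type*} [CommRing R]

lemma mem_idealOfVars_pow_iff_le_order (n : ℕ) (p : MvPolynomial σ R) :
    p ∈ idealOfVars σ R ^ n ↔ (n : ℕ∞) ≤ (p : MvPowerSeries σ R).order := by
  rw [mem_pow_idealOfVars_iff']
  constructor
  · intro h
    refine MvPowerSeries.nat_le_order fun x hx => ?_
    rw [coeff_coe]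
    exact h x hx
  · intro h x hx
    rw [← coeff_coe]
    exact MvPowerSeries.coeff_of_lt_order (lt_of_lt_of_le (by exact_mod_cast hx) h)

lemma idealOfVars_eq_ker_constantCoeff :
    idealOfVars σ R = RingHom.ker (constantCoeff : MvPolynomial σ R →+* R) := by
  ext p
  have := mem_idealOfVars_pow_iff_le_order 1 p
  rw [pow_one, Nat.cast_one, MvPowerSeries.one_le_order_iff_constCoeff_eq_zero] at this
  rw [this, RingHom.mem_ker, ← MvPowerSeries.coeff_zero_eq_constantCoeff_apply, coeff_coe,
    constantCoeff_eq]

/-- Powers of the ideal of the variables are primary, because the order is additive. -/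
lemma mem_idealOfVars_pow_of_mul_mem [IsDomain R] (n : ℕ) {s f : MvPolynomial σ R}
    (hs : s ∉ idealOfVars σ R) (h : s * f ∈ idealOfVars σ R ^ n) : f ∈ idealOfVars σ R ^ n := by
  rw [mem_idealOfVars_pow_iff_le_order, coe_mul, MvPowerSeries.order_mul] at h
  rw [← pow_one (idealOfVars σ R), mem_idealOfVars_pow_iff_le_order, Nat.cast_one,
    Order.one_le_iff_ne_zero, not_not] at hs
  rwa [hs, zero_add, ← mem_idealOfVars_pow_iff_le_order] at h

end Variables

/-! ### Ideals of graphs -/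

section Graph

variable {K : Type*} [Field K] {d : ℕ}

/-- The ideal `(y₁ - q₁(x), …, y_d - q_d(x))` of the graph of the polynomial map `q`. -/
noncomputable def graphIdeal (q : Fin d → MvPolynomial (Fin d) K) :
    Ideal (MvPolynomial (Fin d ⊕ Fin d) K) :=
  Ideal.span (Set.range fun i : Fin d => X (Sum.inr i) - rename Sum.inl (q i))

/-- The isomorphism `K[x, y] ≃ K[x][y]` given by `xᵢ ↦ xᵢ` and `yᵢ ↦ yᵢ + qᵢ(x)`. -/
noncomputable def graphEquiv (q : Fin d → MvPolynomial (Fin d) K) :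
    MvPolynomial (Fin d ⊕ Fin d) K ≃+* MvPolynomial (Fin d) (MvPolynomial (Fin d) K) :=
  RingEquiv.ofRingHom
    (eval₂Hom (C.comp C) (Sum.elim (fun i => C (X i)) fun i => X i + C (q i)))
    (eval₂Hom (rename Sum.inl : MvPolynomial (Fin d) K →ₐ[K] _).toRingHom
      fun i => X (Sum.inr i) - rename Sum.inl (q i))
    (by
      have h : ∀ r : MvPolynomial (Fin d) K,
          eval₂Hom (C.comp C) (Sum.elim (fun i => C (X i)) fun i => X i + C (q i))
            (rename Sum.inl r) = (C r : MvPolynomial (Fin d) (MvPolynomial (Fin d) K)) := by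
        intro r
        induction r using MvPolynomial.induction_on with
        | C a => simp
        | add p q hp hq => rw [map_add, map_add, hp, hq, C_add]
        | mul_X p i hp => rw [map_mul, map_mul, hp, C_mul]; simp
      refine MvPolynomial.ringHom_ext (fun r => ?_) fun i => ?_
      · simpa using h r
      · have := h (q i)
        simp only [coe_eval₂Hom] at this
        simp [this])
    (by
      refine MvPolynomial.ringHom_ext (fun r => ?_) fun i => ?_
      · simp
      · rcases i with i | i <;> simp)

lemma graphEquiv_symm_X (q : Fin d → MvPolynomial (Fin d) K) (i : Fin d) :
    (graphEquiv q).symm (X i) = X (Sum.inr i) - rename Sum.inl (q i) := by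
  simp [graphEquiv]

lemma graphEquiv_symm_C (q : Fin d → MvPolynomial (Fin d) K) (r : MvPolynomial (Fin d) K) :
    (graphEquiv q).symm (C r) = rename Sum.inl r := by
  simp [graphEquiv]

lemma graphIdeal_pow_eq_comap (q : Fin d → MvPolynomial (Fin d) K) (n : ℕ) :
    graphIdeal q ^ n = (idealOfVars (Fin d) (MvPolynomial (Fin d) K) ^ n).comap
      (graphEquiv q : _ →+* _) := by
  have h : graphIdeal q = (idealOfVars (Fin d) (MvPolynomial (Fin d) K)).map
      ((graphEquiv q).symm : _ →+* _) := by
    rw [idealOfVars, Ideal.map_span, ← Set.range_comp, graphIdeal]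
    congr 2
    funext i
    exact (graphEquiv_symm_X q i).symm
  rw [h, ← Ideal.map_pow]
  exact Ideal.map_symm (graphEquiv q)

lemma graphIdeal_eq_comap (q : Fin d → MvPolynomial (Fin d) K) :
    graphIdeal q = (idealOfVars (Fin d) (MvPolynomial (Fin d) K)).comap
      (graphEquiv q : _ →+* _) := by
  simpa using graphIdeal_pow_eq_comap q 1

lemma graphIdeal_isPrime (q : Fin d → MvPolynomial (Fin d) K) : (graphIdeal q).IsPrime := by
  rw [graphIdeal_eq_comap, idealOfVars_eq_ker_constantCoeff]
  have := RingHom.ker_isPrime (constantCoeff (σ := Fin d) (R := MvPolynomial (Fin d) K))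
  exact Ideal.comap_isPrime _ _

lemma mem_graphIdeal_pow_of_mul_mem (q : Fin d → MvPolynomial (Fin d) K) (n : ℕ)
    {s f : MvPolynomial (Fin d ⊕ Fin d) K} (hs : s ∉ graphIdeal q)
    (h : s * f ∈ graphIdeal q ^ n) : f ∈ graphIdeal q ^ n := by
  rw [graphIdeal_pow_eq_comap, Ideal.mem_comap] at h ⊢
  rw [graphIdeal_eq_comap, Ideal.mem_comap] at hs
  rw [map_mul] at h
  exact mem_idealOfVars_pow_of_mul_mem n hs h

/-- Graph ideals of distinct maps are incomparable: reducing `yᵢ - qᵢ(x)` modulo `graphIdeal r`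
gives `rᵢ(x) - qᵢ(x)`. -/
lemma eq_of_graphIdeal_le {q r : Fin d → MvPolynomial (Fin d) K}
    (h : graphIdeal q ≤ graphIdeal r) : q = r := by
  funext i
  have hi : X (Sum.inr i) - rename Sum.inl (q i) ∈ graphIdeal r :=
    h (Ideal.subset_span ⟨i, rfl⟩)
  have hX : X (Sum.inr i) - rename Sum.inl (q i)
      = (graphEquiv r).symm (X i + C (r i) - C (q i)) := by
    rw [map_sub, map_add, graphEquiv_symm_X, graphEquiv_symm_C, graphEquiv_symm_C]
    ring
  rw [graphIdeal_eq_comap, Ideal.mem_comap, hX, idealOfVars_eq_ker_constantCoeff,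
    RingHom.mem_ker, RingHom.coe_coe, RingEquiv.apply_symm_apply] at hi
  simp only [map_sub, map_add, constantCoeff_X, constantCoeff_C, zero_add] at hi
  exact (sub_eq_zero.1 hi).symm

end Graph

/-- For a finite group `G` acting linearly on `R = K[x₁, …, x_d]`, the `n`-th symbolic
power of the Derksen ideal is `⋂_{g ∈ G} (y₁ - g(x₁), …, y_d - g(x_d))ⁿ`. -/
theorem symbolicPower_derksenIdeal_eq_iInf {K : Type*} [Field K] (d : ℕ) (G : Type*)
    [Group G] [Finite G] [MulSemiringAction G (MvPolynomial (Fin d) K)]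
    (hC : ∀ (g : G) (a : K), g • (C a : MvPolynomial (Fin d) K) = C a)
    (hlin : ∀ (g : G) (i : Fin d), (g • (X i : MvPolynomial (Fin d) K)).IsHomogeneous 1)
    (n : ℕ) (hn : 1 ≤ n) :
    symbolicPower (derksenIdeal K d G) n = ⨅ g : G, derksenComponent K d g ^ n := by
  exact symbolicPower_iInf_of_incomparable
    (P := fun g : G => graphIdeal fun i => g • (X i : MvPolynomial (Fin d) K))
    (fun g => graphIdeal_isPrime _)
    (fun g h hgh => congrArg graphIdeal (eq_of_graphIdeal_le hgh)) n
    (fun g s f => mem_graphIdeal_pow_of_mul_mem _ n)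
end

section
/- Let K be a field, R = K[x] a polynomial ring in one variable, and G a finite group acting linearly and faithfully on R. Let S = K[x, y] and let I_G = ⋂_{g ∈ G} (y - g(x)) be the Derksen ideal. Then I_G^{(n)} = I_G^n for every n ≥ 1; equivalently, ⋂_{g ∈ G} (y - g(x))^n = (⋂_{g ∈ G} (y - g(x)))^n for every n ≥ 1. -/
/-!
In dimension one every component `(y - g(x))` of the Derksen ideal is principal, and `K[x, y]` is a
unique factorization domain, so the finite intersection of these components is again principal,
generated by a least common multiple (`isPrincipal_iInf`).

For any principal ideal `(f)` of a Noetherian domain `A` the symbolic powers are the ordinary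
powers (`symbolicPower_span_singleton`). If `a` lies in the `(n+1)`-st symbolic power, then by
induction `a = fⁿ b`, and cancelling `fⁿ` from `s a ∈ (fⁿ⁺¹)` shows that `b` dies in `(A/f)_p` for
every associated prime `p` of `A/f`. The annihilator of a nonzero element of `A/f` is contained in
an associated prime, so `b ∈ (f)`.
-/


open MvPolynomial

theorem mem_symbolicPower_iff {A : Type*} [CommRing A] (I : Ideal A) (n : ℕ) (a : A) :
    a ∈ symbolicPower I n ↔
      ∀ p ∈ associatedPrimes A (A ⧸ I), ∃ s ∉ p, s * a ∈ I ^ n := by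
  simp only [symbolicPower, Ideal.mem_iInf, Ideal.mem_comap]
  refine forall_congr' fun p => forall_congr' fun hp => ?_
  haveI : p.IsPrime := hp.isPrime
  rw [IsLocalization.algebraMap_mem_map_algebraMap_iff p.primeCompl]
  rfl

/-- Over a Noetherian ring, an element that vanishes in the localization of `A ⧸ I` at each of its
associated primes lies in `I`. -/
theorem mem_of_forall_associatedPrimes {A : Type*} [CommRing A] [IsNoetherianRing A]
    (I : Ideal A) (b : A)
    (h : ∀ p ∈ associatedPrimes A (A ⧸ I), ∃ s ∉ p, s * b ∈ I) : b ∈ I := by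
  by_contra hb
  have hb' : (Ideal.Quotient.mk I b) ≠ 0 := fun h0 => hb (Ideal.Quotient.eq_zero_iff_mem.mp h0)
  obtain ⟨p, hp, hle⟩ := exists_le_isAssociatedPrime_of_isNoetherianRing A _ hb'
  obtain ⟨s, hs, hsb⟩ := h p hp
  refine hs (hle ?_)
  have h0 : Ideal.Quotient.mk I (s * b) = 0 := Ideal.Quotient.eq_zero_iff_mem.mpr hsb
  rw [Submodule.mem_colon_singleton, Submodule.mem_bot]
  exact h0

theorem symbolicPower_span_singleton {A : Type*} [CommRing A] [IsDomain A] [IsNoetherianRing A]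
    (f : A) (n : ℕ) : symbolicPower (Ideal.span {f}) n = Ideal.span {f} ^ n := by
  refine le_antisymm ?_ fun a ha => ?_
  · induction n with
    | zero => simp
    | succ n ih =>
      intro a ha
      rw [mem_symbolicPower_iff] at ha
      have ha' : a ∈ Ideal.span {f} ^ n := ih <| by
        rw [mem_symbolicPower_iff]
        intro p hp
        obtain ⟨s, hs, hsa⟩ := ha p hp
        exact ⟨s, hs, Ideal.pow_le_pow_right n.le_succ hsa⟩
      rw [Ideal.span_singleton_pow, Ideal.mem_span_singleton] at ha'
      obtain ⟨b, rfl⟩ := ha'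
      by_cases hf : f ^ n = 0
      · simp [hf]
      have hb : b ∈ Ideal.span {f} := by
        refine mem_of_forall_associatedPrimes _ _ fun p hp => ?_
        obtain ⟨s, hs, hsa⟩ := ha p hp
        refine ⟨s, hs, ?_⟩
        rw [Ideal.span_singleton_pow, Ideal.mem_span_singleton] at hsa
        obtain ⟨c, hc⟩ := hsa
        rw [Ideal.mem_span_singleton]
        exact ⟨c, mul_left_cancel₀ hf (by linear_combination hc)⟩
      rw [pow_succ]
      exact Ideal.mul_mem_mul
        (Ideal.pow_mem_pow (Ideal.mem_span_singleton_self f) n) hb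
  · rw [mem_symbolicPower_iff]
    exact fun p hp => ⟨1, (Ideal.ne_top_iff_one p).mp hp.isPrime.ne_top, by simpa using ha⟩

/-- Finite intersections of principal ideals in a unique factorization domain are principal,
generated by a least common multiple. -/
theorem isPrincipal_iInf {A ι : Type*} [CommRing A] [IsDomain A] [UniqueFactorizationMonoid A]
    [Finite ι] (f : ι → A) : ∃ a : A, ⨅ i, Ideal.span {f i} = Ideal.span {a} := by
  classical
  obtain ⟨_⟩ : Nonempty (NormalizedGCDMonoid A) := inferInstance
  cases nonempty_fintype ι
  refine ⟨Finset.univ.lcm f, ?_⟩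
  ext x
  simp [Ideal.mem_span_singleton, Finset.lcm_dvd_iff]

/-- For a finite group acting linearly and faithfully on `K[x]`, the symbolic powers of
the Derksen ideal coincide with its ordinary powers. -/
theorem symbolicPower_derksenIdeal_dim_one {K : Type*} [Field K] (G : Type*)
    [Group G] [Finite G] [MulSemiringAction G (MvPolynomial (Fin 1) K)]
    (hC : ∀ (g : G) (a : K), g • (C a : MvPolynomial (Fin 1) K) = C a)
    (hlin : ∀ (g : G) (i : Fin 1), (g • (X i : MvPolynomial (Fin 1) K)).IsHomogeneous 1)
    (hfaith : ∀ g h : G, g ≠ h →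
      g • (X 0 : MvPolynomial (Fin 1) K) ≠ h • (X 0 : MvPolynomial (Fin 1) K))
    (n : ℕ) (hn : 1 ≤ n) :
    symbolicPower (derksenIdeal K 1 G) n = derksenIdeal K 1 G ^ n := by
  have hcomp : ∀ g : G, derksenComponent K 1 g = Ideal.span
      {X (Sum.inr 0) - rename Sum.inl (g • (X 0 : MvPolynomial (Fin 1) K))} := fun g => by
    rw [derksenComponent, Set.range_unique]
    rfl
  obtain ⟨f, hf⟩ := isPrincipal_iInf fun g : G =>
    (X (Sum.inr 0) - rename Sum.inl (g • (X 0 : MvPolynomial (Fin 1) K)) :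
      MvPolynomial (Fin 1 ⊕ Fin 1) K)
  have hI : derksenIdeal K 1 G = Ideal.span {f} := by
    rw [derksenIdeal, ← hf]
    exact iInf_congr hcomp
  rw [hI, symbolicPower_span_singleton]
end

section
/- Let K be a field of characteristic different from 2, R = K[x_1, ..., x_d] a polynomial ring, and G = Z/2Z acting linearly on R. Let S = K[x_1, ..., x_d, y_1, ..., y_d] and let I_G be the Derksen ideal of this action. Then I_G^{(n)} = I_G^n for every n ≥ 1. -/
/-!
As the group has two elements, the Derksen ideal is an
intersection `P ∩ Q` of two ideals, and each of these is generated by linear forms. For every such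
intersection the symbolic and ordinary powers agree (`symbolicPower_inf_linForm`).

Two subspaces of a vector space are spanned by subsets of a common basis (`exists_common_basis`).
After a linear change of variables, `P` and `Q` are therefore generated by sets `s` and `t` of
variables. The map `K[X] → K[X][T]` multiplying the variables of `s` by `T` identifies membership
in `Pⁿ` with divisibility by `Tⁿ` (`mem_varIdeal_pow_iff`); as `T` is prime, `P` is prime and all
powers of `P` are primary. Hence localizing at the associated primes of `P ∩ Q` gives
`(P ∩ Q)^(n) ⊆ Pⁿ ∩ Qⁿ`; if one of the ideals contains the other, the intersection is a single
prime with primary powers.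

Finally `Pⁿ ∩ Qⁿ ⊆ (P ∩ Q)ⁿ` is checked on monomials (`monomial_mem_inf_pow`): a monomial of degree
at least `n` in `s` and in `t` is divisible by a product of `n` factors, each a variable of `s ∩ t` or a product
of a variable of `s` and one of `t`.
-/

open MvPolynomial

/-! ### Symbolic powers of an intersection of two primes -/

/-- `P` is prime and its powers are primary: multiplication by an element outside `P`
is injective modulo every `Pⁿ`. -/
def HasPrimaryPowers {A : Type*} [CommRing A] (P : Ideal A) : Prop :=
  P.IsPrime ∧ ∀ (n : ℕ) (a f : A), a ∉ P → a * f ∈ P ^ n → f ∈ P ^ n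

theorem pow_le_symbolicPower {A : Type*} [CommRing A] (I : Ideal A) (n : ℕ) :
    I ^ n ≤ symbolicPower I n :=
  le_iInf₂ fun _ _ => Ideal.le_comap_map

theorem symbolicPower_le_pow_of_mem {A : Type*} [CommRing A] {I P : Ideal A}
    (hP : HasPrimaryPowers P) (hIP : I ≤ P) (hass : P ∈ associatedPrimes A (A ⧸ I)) (n : ℕ) :
    symbolicPower I n ≤ P ^ n := by
  intro f hf
  have hf' := (Submodule.mem_iInf _).1 ((Submodule.mem_iInf _).1 hf P) hass
  have : P.IsPrime := hP.1
  obtain ⟨a, ha, haf⟩ :=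
    (IsLocalization.algebraMap_mem_map_algebraMap_iff P.primeCompl _ _ _).1 (Ideal.mem_comap.1 hf')
  exact hP.2 n a f ha (Ideal.pow_right_mono hIP n haf)

/-- If some `c ∈ Q` lies outside the prime `P`, then `P` is the annihilator of the class of `c`
modulo `P ⊓ Q`. -/
theorem mem_associatedPrimes_inf {A : Type*} [CommRing A] {P Q : Ideal A} (hP : P.IsPrime)
    {c : A} (hcQ : c ∈ Q) (hcP : c ∉ P) : P ∈ associatedPrimes A (A ⧸ (P ⊓ Q)) := by
  refine ⟨hP, Ideal.Quotient.mk _ c, ?_⟩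
  have : (⊥ : Submodule A (A ⧸ (P ⊓ Q))).colon {Ideal.Quotient.mk _ c} = P := by
    ext r
    rw [Submodule.mem_colon_singleton, Submodule.mem_bot]
    change Ideal.Quotient.mk (P ⊓ Q) (r * c) = 0 ↔ _
    rw [Ideal.Quotient.eq_zero_iff_mem]
    exact ⟨fun h => (hP.mem_or_mem h.1).resolve_right hcP,
      fun h => ⟨P.mul_mem_right _ h, Q.mul_mem_left _ hcQ⟩⟩
  rw [this, hP.radical]

theorem symbolicPower_prime {A : Type*} [CommRing A] {P : Ideal A}
    (hP : HasPrimaryPowers P) (n : ℕ) : symbolicPower P n = P ^ n := by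
  refine le_antisymm (symbolicPower_le_pow_of_mem hP le_rfl ?_ n) (pow_le_symbolicPower P n)
  have h := mem_associatedPrimes_inf (Q := ⊤) hP.1 (c := 1) trivial
    ((Ideal.ne_top_iff_one P).1 hP.1.ne_top)
  rwa [inf_top_eq] at h

theorem symbolicPower_inf {A : Type*} [CommRing A] {P Q : Ideal A}
    (hP : HasPrimaryPowers P) (hQ : HasPrimaryPowers Q) (n : ℕ)
    (hPQ : P ^ n ⊓ Q ^ n ≤ (P ⊓ Q) ^ n) : symbolicPower (P ⊓ Q) n = (P ⊓ Q) ^ n := by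
  by_cases h₁ : P ≤ Q
  · rw [inf_eq_left.2 h₁, symbolicPower_prime hP]
  by_cases h₂ : Q ≤ P
  · rw [inf_eq_right.2 h₂, symbolicPower_prime hQ]
  obtain ⟨p, hpP, hpQ⟩ := SetLike.not_le_iff_exists.1 h₁
  obtain ⟨q, hqQ, hqP⟩ := SetLike.not_le_iff_exists.1 h₂
  refine le_antisymm (le_trans (le_inf ?_ ?_) hPQ) (pow_le_symbolicPower _ n)
  · exact symbolicPower_le_pow_of_mem hP inf_le_left (mem_associatedPrimes_inf hP.1 hqQ hqP) n
  · refine symbolicPower_le_pow_of_mem hQ inf_le_right ?_ n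
    rw [inf_comm]
    exact mem_associatedPrimes_inf hQ.1 hpP hpQ

/-! ### Ideals generated by variables -/

section Variables

variable {K : Type*} [Field K] {τ : Type*}

/-- The ideal of `K[X_i : i ∈ τ]` generated by the variables with index in `s`. -/
noncomputable def varIdeal (K : Type*) [Field K] {τ : Type*} (s : Set τ) :
    Ideal (MvPolynomial τ K) :=
  Ideal.span (X '' s)

open Classical in
/-- The degree of the monomial with exponent `m` in the variables with index in `s`. -/
noncomputable def degOn (s : Set τ) : (τ →₀ ℕ) →+ ℕ :=
  Finsupp.weight fun i => if i ∈ s then 1 else 0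

open Classical in
/-- The `K`-algebra map `K[X] → K[X][T]` sending `X_i` to `X_i T` for `i ∈ s` and to `X_i`
otherwise; it records the grading by `degOn s` in the exponent of `T`. -/
noncomputable def gradeHom (K : Type*) [Field K] {τ : Type*} (s : Set τ) :
    MvPolynomial τ K →ₐ[K] Polynomial (MvPolynomial τ K) :=
  aeval fun i => Polynomial.C (X i) * (if i ∈ s then Polynomial.X else 1)

theorem degOn_single (s : Set τ) (i : τ) [Decidable (i ∈ s)] :
    degOn s (Finsupp.single i 1) = if i ∈ s then 1 else 0 := by
  simp [degOn, Finsupp.weight_single]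

theorem exists_of_degOn_pos {s : Set τ} {m : τ →₀ ℕ} (h : 0 < degOn s m) :
    ∃ i ∈ s, m i ≠ 0 := by
  classical
  by_contra! hc
  refine h.ne' ?_
  rw [degOn, Finsupp.weight_apply]
  refine Finset.sum_eq_zero fun i _ => ?_
  by_cases hi : i ∈ s
  · simp [hc i hi]
  · simp [hi]

theorem gradeHom_monomial (s : Set τ) (m : τ →₀ ℕ) (a : K) :
    gradeHom K s (monomial m a) = Polynomial.monomial (degOn s m) (monomial m a) := by
  classical
  induction m using Finsupp.induction_linear generalizing a with
  | zero =>
    simp only [map_zero]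
    change gradeHom K s (C a) = Polynomial.C (C a)
    exact (gradeHom K s).commutes a
  | single i k =>
    rw [← C_mul_X_pow_eq_monomial, map_mul, map_pow]
    have hCa : gradeHom K s (C a) = Polynomial.C (C a) := (gradeHom K s).commutes a
    have hXi : gradeHom K s (X i) =
        Polynomial.C (X i) * (if i ∈ s then Polynomial.X else 1) := by
      simp [gradeHom]
    have hdeg : degOn s (Finsupp.single i k) = if i ∈ s then k else 0 := by
      simp [degOn, Finsupp.weight_single]
    rw [hCa, hXi, hdeg]
    by_cases hi : i ∈ s
    · simp only [hi, if_true, ← Polynomial.C_mul_X_pow_eq_monomial, map_mul, map_pow]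
      ring
    · simp [hi]
  | add f g hf hg =>
    have h : monomial (f + g) a = monomial f a * monomial g (1 : K) := by
      rw [monomial_mul, mul_one]
    rw [h, map_mul, hf, hg, Polynomial.monomial_mul_monomial, map_add]

theorem coeff_gradeHom (s : Set τ) (f : MvPolynomial τ K) (m : τ →₀ ℕ) :
    coeff m ((gradeHom K s f).coeff (degOn s m)) = coeff m f := by
  classical
  induction f using MvPolynomial.induction_on' with
  | monomial u a =>
    rw [gradeHom_monomial, Polynomial.coeff_monomial]
    by_cases h : u = m
    · simp [h]
    · split_ifs <;> simp [h, coeff_monomial]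
  | add p q hp hq => simp [hp, hq]

/-- A monomial of degree at least `n` both in the variables of `s` and in those of `t` lies in
`(P_s ∩ P_t)ⁿ`: one can split off either a variable from `s ∩ t` or a product of a variable
from `s \ t` and one from `t \ s`, lowering each degree by exactly one. -/
theorem monomial_mem_inf_pow (s t : Set τ) (n : ℕ) (m : τ →₀ ℕ) (hs : n ≤ degOn s m)
    (ht : n ≤ degOn t m) (a : K) : monomial m a ∈ (varIdeal K s ⊓ varIdeal K t) ^ n := by
  classical
  induction n generalizing m a with
  | zero => simp
  | succ n ih =>
    have key : ∀ u v : τ →₀ ℕ, m = u + v → degOn s u = 1 → degOn t u = 1 →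
        (monomial u 1 : MvPolynomial τ K) ∈ varIdeal K s ⊓ varIdeal K t →
        monomial m a ∈ (varIdeal K s ⊓ varIdeal K t) ^ (n + 1) := by
      intro u v huv hus hut hu
      have hm : monomial m a = monomial v a * monomial u (1 : K) := by
        rw [monomial_mul, huv, add_comm, mul_one]
      rw [hm, pow_succ]
      subst huv
      rw [map_add] at hs ht
      exact Ideal.mul_mem_mul (ih v (by omega) (by omega) a) hu
    have hX : ∀ (r : Set τ) (i : τ), i ∈ r → (X i : MvPolynomial τ K) ∈ varIdeal K r :=
      fun r i hi => Ideal.subset_span ⟨i, hi, rfl⟩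
    by_cases hc : ∃ i ∈ s ∩ t, m i ≠ 0
    · obtain ⟨i, ⟨his, hit⟩, hi⟩ := hc
      have hle : Finsupp.single i 1 ≤ m := by
        rw [Finsupp.single_le_iff]; omega
      exact key (Finsupp.single i 1) (m - Finsupp.single i 1) (add_tsub_cancel_of_le hle).symm
        (by rw [degOn_single, if_pos his]) (by rw [degOn_single, if_pos hit])
        ⟨hX s i his, hX t i hit⟩
    · push Not at hc
      obtain ⟨i, his, hi⟩ := exists_of_degOn_pos (Nat.lt_of_lt_of_le n.succ_pos hs)
      obtain ⟨j, hjt, hj⟩ := exists_of_degOn_pos (Nat.lt_of_lt_of_le n.succ_pos ht)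
      have hit : i ∉ t := fun h => hi (hc i ⟨his, h⟩)
      have hjs : j ∉ s := fun h => hj (hc j ⟨h, hjt⟩)
      have hij : i ≠ j := fun h => hit (h ▸ hjt)
      have hle : Finsupp.single i 1 + Finsupp.single j 1 ≤ m := by
        intro k
        rw [Finsupp.add_apply, Finsupp.single_apply, Finsupp.single_apply]
        split_ifs with h₁ h₂ h₂
        · exact absurd (h₁.trans h₂.symm) hij
        · subst h₁; omega
        · subst h₂; omega
        · omega
      refine key _ (m - (Finsupp.single i 1 + Finsupp.single j 1)) (add_tsub_cancel_of_le hle).symm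
        (by rw [map_add, degOn_single, degOn_single, if_pos his, if_neg hjs])
        (by rw [map_add, degOn_single, degOn_single, if_neg hit, if_pos hjt]) ?_
      have hXX : (monomial (Finsupp.single i 1 + Finsupp.single j 1) 1 : MvPolynomial τ K)
          = X i * X j := by
        rw [X, X, monomial_mul, mul_one]
      rw [hXX]
      exact ⟨Ideal.mul_mem_right _ _ (hX s i his), Ideal.mul_mem_left _ _ (hX t j hjt)⟩

theorem le_degOn_of_dvd {s : Set τ} {n : ℕ} {f : MvPolynomial τ K}
    (h : Polynomial.X ^ n ∣ gradeHom K s f) {m : τ →₀ ℕ} (hm : m ∈ f.support) :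
    n ≤ degOn s m := by
  by_contra! hlt
  rw [mem_support_iff, ← coeff_gradeHom s, Polynomial.X_pow_dvd_iff.1 h _ hlt] at hm
  simp at hm

theorem mem_inf_pow_of_dvd {s t : Set τ} {n : ℕ} {f : MvPolynomial τ K}
    (hs : Polynomial.X ^ n ∣ gradeHom K s f) (ht : Polynomial.X ^ n ∣ gradeHom K t f) :
    f ∈ (varIdeal K s ⊓ varIdeal K t) ^ n := by
  rw [f.as_sum]
  exact Ideal.sum_mem _ fun m hm =>
    monomial_mem_inf_pow s t n m (le_degOn_of_dvd hs hm) (le_degOn_of_dvd ht hm) _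

/-- Membership in powers of `varIdeal K s` is divisibility by powers of the prime element `T`
after applying `gradeHom K s`. -/
theorem mem_varIdeal_pow_iff {s : Set τ} {n : ℕ} {f : MvPolynomial τ K} :
    f ∈ varIdeal K s ^ n ↔ Polynomial.X ^ n ∣ gradeHom K s f := by
  classical
  refine ⟨fun h => ?_, fun h => by simpa using mem_inf_pow_of_dvd h h⟩
  have h1 : Ideal.map (gradeHom K s) (varIdeal K s) ≤ Ideal.span {Polynomial.X} := by
    rw [varIdeal, Ideal.map_span, Ideal.span_le]
    rintro _ ⟨_, ⟨i, hi, rfl⟩, rfl⟩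
    rw [SetLike.mem_coe, Ideal.mem_span_singleton, gradeHom, aeval_X, if_pos hi]
    exact dvd_mul_left _ _
  have h2 := Ideal.pow_right_mono h1 n
  rw [← Ideal.map_pow, Ideal.span_singleton_pow] at h2
  exact Ideal.mem_span_singleton.1 (h2 (Ideal.mem_map_of_mem _ h))

theorem mem_varIdeal_iff {s : Set τ} {f : MvPolynomial τ K} :
    f ∈ varIdeal K s ↔ Polynomial.X ∣ gradeHom K s f := by
  simpa using mem_varIdeal_pow_iff (s := s) (n := 1) (f := f)

theorem hasPrimaryPowers_varIdeal (s : Set τ) : HasPrimaryPowers (varIdeal K s) := by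
  have hT : Prime (Polynomial.X : Polynomial (MvPolynomial τ K)) := Polynomial.prime_X
  refine ⟨⟨?_, ?_⟩, ?_⟩
  · rw [Ideal.ne_top_iff_one, mem_varIdeal_iff, map_one]
    exact fun h => hT.not_isUnit (isUnit_of_dvd_one h)
  · intro f g h
    simp only [mem_varIdeal_iff, map_mul] at h ⊢
    exact hT.dvd_or_dvd h
  · intro n a f ha h
    rw [mem_varIdeal_iff] at ha
    rw [mem_varIdeal_pow_iff, map_mul] at h
    exact mem_varIdeal_pow_iff.2 (hT.pow_dvd_of_dvd_mul_left n ha h)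

theorem varIdeal_pow_inf_le (s t : Set τ) (n : ℕ) :
    varIdeal K s ^ n ⊓ varIdeal K t ^ n ≤ (varIdeal K s ⊓ varIdeal K t) ^ n :=
  fun _ h => mem_inf_pow_of_dvd (mem_varIdeal_pow_iff.1 h.1) (mem_varIdeal_pow_iff.1 h.2)

end Variables

/-! ### Ideals generated by linear forms -/

section LinearForms

variable {K : Type*} [Field K]

/-- Any two subspaces of a vector space are spanned by subsets of a common basis. -/
theorem exists_common_basis {V : Type*} [AddCommGroup V] [Module K V] (N₁ N₂ : Submodule K V) :
    ∃ (B : Set V) (b : Module.Basis B K V) (s t : Set B),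
      Submodule.span K (b '' s) = N₁ ∧ Submodule.span K (b '' t) = N₂ := by
  have span_eq : ∀ (N : Submodule K V) (A : Set V), A ⊆ N → (N : Set V) ⊆ Submodule.span K A →
      Submodule.span K A = N := fun N A h₁ h₂ => le_antisymm (Submodule.span_le.2 h₁) h₂
  obtain ⟨B₀, h₀N, -, h₀s, h₀i⟩ := exists_linearIndepOn_id_extension (K := K)
    (linearIndepOn_empty K id) (Set.empty_subset ((N₁ ⊓ N₂ : Submodule K V) : Set V))
  obtain ⟨B₁, h₁N, h₀₁, h₁s, h₁i⟩ := exists_linearIndepOn_id_extension (K := K)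
    h₀i (h₀N.trans (show ((N₁ ⊓ N₂ : Submodule K V) : Set V) ⊆ N₁ from fun _ h => h.1))
  obtain ⟨B₂, h₂N, h₀₂, h₂s, h₂i⟩ := exists_linearIndepOn_id_extension (K := K)
    h₀i (h₀N.trans (show ((N₁ ⊓ N₂ : Submodule K V) : Set V) ⊆ N₂ from fun _ h => h.2))
  -- Vectors of `B₂` outside `B₀` are independent modulo `N₁`, since `N₁ ⊓ N₂` is spanned by `B₀`.
  have hdisj : Disjoint (Submodule.span K B₁) (Submodule.span K (B₂ \ B₀)) := by
    rw [span_eq N₁ B₁ h₁N h₁s, Submodule.disjoint_def]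
    intro x hx₁ hx
    have hx₂ : x ∈ N₂ := Submodule.span_le.2 (Set.sdiff_subset.trans h₂N) hx
    have hd : Disjoint (Submodule.span K B₀) (Submodule.span K (B₂ \ B₀)) := by
      have h := h₂i.linearIndependent.disjoint_span_image
        (s := {k : B₂ | (k : V) ∈ B₀}) (t := {k : B₂ | (k : V) ∉ B₀})
        (Set.disjoint_left.2 fun k hk hk' => hk' hk)
      convert h using 2
      · ext v
        simpa using fun hv => h₀₂ hv
      · ext v
        simp [and_comm]
    exact Submodule.disjoint_def.1 hd x (h₀s ⟨hx₁, hx₂⟩) hx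
  have hi : LinearIndepOn K id (B₁ ∪ B₂ \ B₀) :=
    h₁i.id_union (h₂i.mono Set.sdiff_subset) hdisj
  have hsub₁ : B₁ ⊆ hi.extend (Set.subset_univ _) :=
    Set.subset_union_left.trans (hi.subset_extend _)
  have hsub₂ : B₂ ⊆ hi.extend (Set.subset_univ _) := by
    refine Set.Subset.trans (fun v hv => ?_) (hi.subset_extend _)
    by_cases h : v ∈ B₀
    · exact Or.inl (h₀₁ h)
    · exact Or.inr ⟨hv, h⟩
  refine ⟨_, Module.Basis.extend hi, {k | (k : V) ∈ B₁}, {k | (k : V) ∈ B₂}, ?_, ?_⟩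
  · rw [Module.Basis.coe_extend, ← span_eq N₁ B₁ h₁N h₁s]
    congr 1
    ext v
    simpa using fun hv => hsub₁ hv
  · rw [Module.Basis.coe_extend, ← span_eq N₂ B₂ h₂N h₂s]
    congr 1
    ext v
    simpa using fun hv => hsub₂ hv

/-- The linear form with given coefficients. -/
noncomputable def linForm (K : Type*) [Field K] (σ : Type*) :
    (σ →₀ K) →ₗ[K] MvPolynomial σ K :=
  Finsupp.linearCombination K X

theorem span_linForm_span {σ : Type*} (A : Set (σ →₀ K)) :
    Ideal.span (linForm K σ '' (Submodule.span K A : Set (σ →₀ K))) =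
      Ideal.span (linForm K σ '' A) := by
  refine le_antisymm (Ideal.span_le.2 ?_)
    (Ideal.span_mono (Set.image_mono Submodule.subset_span))
  rintro _ ⟨v, hv, rfl⟩
  have : Submodule.span K A ≤
      (((Ideal.span (linForm K σ '' A)).restrictScalars K).comap (linForm K σ)) :=
    Submodule.span_le.2 fun w hw => Ideal.subset_span ⟨w, hw, rfl⟩
  exact this hv

/-- The linear change of variables attached to a basis of the space of linear forms. -/
theorem exists_changeOfVariables {σ τ : Type*} (b : Module.Basis τ K (σ →₀ K)) :
    ∃ E : MvPolynomial τ K ≃ₐ[K] MvPolynomial σ K, ∀ k, E (X k) = linForm K σ (b k) := by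
  refine ⟨(SymmetricAlgebra.equivMvPolynomial b).symm.trans
    (SymmetricAlgebra.equivMvPolynomial Finsupp.basisSingleOne), fun k => ?_⟩
  have h : (SymmetricAlgebra.equivMvPolynomial
      (Finsupp.basisSingleOne : Module.Basis σ K (σ →₀ K))).toLinearMap ∘ₗ
      SymmetricAlgebra.ι K (σ →₀ K) = linForm K σ := by
    refine Finsupp.basisSingleOne.ext fun i => ?_
    rw [LinearMap.comp_apply]
    refine (SymmetricAlgebra.equivMvPolynomial_ι_apply _ i).trans ?_
    simp [linForm]
  rw [← h, AlgEquiv.trans_apply, ← SymmetricAlgebra.equivMvPolynomial_ι_apply b,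
    AlgEquiv.symm_apply_apply]
  rfl

theorem HasPrimaryPowers.map {A B : Type*} [CommRing A] [CommRing B] (e : A ≃+* B)
    {P : Ideal A} (hP : HasPrimaryPowers P) : HasPrimaryPowers (P.map (e : A →+* B)) := by
  have hmem : ∀ (I : Ideal A) (x : B), x ∈ I.map (e : A →+* B) ↔ e.symm x ∈ I := fun I x => by
    rw [Ideal.map_comap_of_equiv]; rfl
  refine ⟨?_, fun n a f ha h => ?_⟩
  · have := hP.1
    exact Ideal.map_isPrime_of_equiv e
  · rw [hmem] at ha
    rw [← Ideal.map_pow, hmem, map_mul] at h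
    rw [← Ideal.map_pow, hmem]
    exact hP.2 n _ _ ha h

/-- The symbolic and ordinary powers of an intersection of two ideals generated by linear forms
agree. -/
theorem symbolicPower_inf_linForm {σ : Type*} (A₁ A₂ : Set (σ →₀ K)) (n : ℕ) :
    symbolicPower (Ideal.span (linForm K σ '' A₁) ⊓ Ideal.span (linForm K σ '' A₂)) n =
      (Ideal.span (linForm K σ '' A₁) ⊓ Ideal.span (linForm K σ '' A₂)) ^ n := by
  obtain ⟨B, b, s, t, hs, ht⟩ := exists_common_basis (Submodule.span K A₁) (Submodule.span K A₂)
  obtain ⟨E, hE⟩ := exists_changeOfVariables b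
  let E' : MvPolynomial B K →+* MvPolynomial σ K := (E.toRingEquiv : _ →+* _)
  have hmap : ∀ (r : Set B) (A : Set (σ →₀ K)),
      Submodule.span K (b '' r) = Submodule.span K A →
      Ideal.span (linForm K σ '' A) = (varIdeal K r).map E' := by
    intro r A h
    rw [← span_linForm_span, ← h, span_linForm_span, varIdeal, Ideal.map_span, Set.image_image,
      Set.image_image]
    congr 1
    exact Set.image_congr fun k _ => (hE k).symm
  have hinf : ∀ I J : Ideal (MvPolynomial B K), (I ⊓ J).map E' = I.map E' ⊓ J.map E' := fun I J => by
    simp only [E', Ideal.map_comap_of_equiv, Ideal.comap_inf]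
  rw [hmap s A₁ hs, hmap t A₂ ht]
  refine symbolicPower_inf ((hasPrimaryPowers_varIdeal s).map _)
    ((hasPrimaryPowers_varIdeal t).map _) n ?_
  rw [← hinf, ← Ideal.map_pow, ← Ideal.map_pow, ← Ideal.map_pow, ← hinf]
  exact Ideal.map_mono (varIdeal_pow_inf_le s t n)

theorem exists_linForm_of_isHomogeneous {σ : Type*} {f : MvPolynomial σ K}
    (hf : f.IsHomogeneous 1) : ∃ v, linForm K σ v = f := by
  have : f ∈ homogeneousSubmodule σ K 1 := hf
  rw [homogeneousSubmodule_one_eq_span_X, ← Finsupp.range_linearCombination] at this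
  exact this

end LinearForms

/-! ### Derksen ideals -/

theorem exists_derksenComponent_eq {K : Type*} [Field K] {d : ℕ} {G : Type*} [Group G]
    [MulSemiringAction G (MvPolynomial (Fin d) K)] (g : G)
    (hlin : ∀ i : Fin d, (g • (X i : MvPolynomial (Fin d) K)).IsHomogeneous 1) :
    ∃ A : Set (Fin d ⊕ Fin d →₀ K),
      derksenComponent K d g = Ideal.span (linForm K (Fin d ⊕ Fin d) '' A) := by
  have h : ∀ i : Fin d, ∃ v, linForm K (Fin d ⊕ Fin d) v =
      X (Sum.inr i) - rename Sum.inl (g • (X i : MvPolynomial (Fin d) K)) := fun i =>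
    exists_linForm_of_isHomogeneous ((isHomogeneous_X K _).sub ((hlin i).rename_isHomogeneous))
  choose v hv using h
  refine ⟨Set.range v, ?_⟩
  rw [derksenComponent, ← Set.range_comp]
  congr 2
  exact funext fun i => (hv i).symm

/-- For `G = ℤ/2ℤ` acting linearly on `K[x₁, …, x_d]` with `char K ≠ 2`, the symbolic
powers of the Derksen ideal coincide with its ordinary powers. -/
theorem symbolicPower_derksenIdeal_Z2 {K : Type*} [Field K] (hchar : ringChar K ≠ 2) (d : ℕ)
    [MulSemiringAction (Multiplicative (ZMod 2)) (MvPolynomial (Fin d) K)]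
    (hC : ∀ (g : Multiplicative (ZMod 2)) (a : K),
      g • (C a : MvPolynomial (Fin d) K) = C a)
    (hlin : ∀ (g : Multiplicative (ZMod 2)) (i : Fin d),
      (g • (X i : MvPolynomial (Fin d) K)).IsHomogeneous 1)
    (n : ℕ) (hn : 1 ≤ n) :
    symbolicPower (derksenIdeal K d (Multiplicative (ZMod 2))) n =
      derksenIdeal K d (Multiplicative (ZMod 2)) ^ n := by
  have hG : ∀ g : Multiplicative (ZMod 2), g = 1 ∨ g = Multiplicative.ofAdd 1 := by decide
  have hI : derksenIdeal K d (Multiplicative (ZMod 2)) =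
      derksenComponent K d (1 : Multiplicative (ZMod 2)) ⊓
        derksenComponent K d (Multiplicative.ofAdd (1 : ZMod 2)) := by
    refine le_antisymm (le_inf (iInf_le _ _) (iInf_le _ _)) (le_iInf fun g => ?_)
    rcases hG g with rfl | rfl
    · exact inf_le_left
    · exact inf_le_right
  obtain ⟨A₁, h₁⟩ := exists_derksenComponent_eq (1 : Multiplicative (ZMod 2)) (hlin _)
  obtain ⟨A₂, h₂⟩ := exists_derksenComponent_eq (Multiplicative.ofAdd (1 : ZMod 2)) (hlin _)
  rw [hI, h₁, h₂]
  exact symbolicPower_inf_linForm A₁ A₂ n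
end

section
/- Let K be an algebraically closed field, R = K[x_1, ..., x_d] a polynomial ring, and G = ⟨g_1, ..., g_a⟩ a finite group with a ≤ d acting linearly on R by g_i(x_j) = x_j if j ≠ i and g_i(x_i) = ω_i x_i, where ω_i ∈ K is a primitive d_i-th root of unity with d_i ≥ 1. Let I_G be the Derksen ideal of this action in S = K[x_1, ..., x_d, y_1, ..., y_d]. Then I_G^{(n)} = I_G^n for every n ≥ 1. -/
/-!
The group acts through diagonal matrices `ζ = (ζ₁, …, ζ_d)`. Since each generator rescales a single
variable, the matrices that occur form a full product `∏ᵢ Zᵢ` of finite sets `Zᵢ ⊆ K`. Hence the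
Derksen ideal is the complete intersection `I = (f₁, …, f_d)` with
`fᵢ = ∏_{η ∈ Zᵢ} (yᵢ - η xᵢ)`: the ideal of these products is the intersection of the linear primes
`(yᵢ - ζᵢ xᵢ)`, `ζ ∈ ∏ᵢ Zᵢ` (`mem_prodIdeal_iff`). The same description applied to subsets of the
`fᵢ` shows that they form a regular sequence.

For an ideal `I` generated by a regular sequence, `Iᵐ / Iᵐ⁺¹` is free over `A / I`, so a
nonzerodivisor modulo `I` is a nonzerodivisor modulo every power of `I`. The consequence of freeness
that is needed is isolated in `PowersRegular`, a property of ideals that survives adjoining a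
nonzerodivisor (`PowersRegular.sup_span_singleton`). Prime avoidance over the finitely many
associated primes of `A / I` then gives `I⁽ⁿ⁾ = Iⁿ` (`symbolicPower_eq_pow_of_regularMod`).
-/

open MvPolynomial

/-! ### Powers of ideals generated by regular sequences -/

/-- `u` is a nonzerodivisor modulo the ideal `I`, phrased as `(I : u) = I`. -/
def RegularMod {A : Type*} [CommRing A] (I : Ideal A) (u : A) : Prop :=
  ∀ s, u * s ∈ I → s ∈ I

/-- An elementwise shadow of "`Jᵐ / Jᵐ⁺¹` is free over `A / J` for all `m`": if `u` is a
nonzerodivisor modulo an ideal `Q ⊇ J`, then it is one on `Jᵐ / Q Jᵐ`. -/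
def PowersRegular {A : Type*} [CommRing A] (J : Ideal A) : Prop :=
  ∀ Q : Ideal A, J ≤ Q → ∀ u, RegularMod Q u →
    ∀ m : ℕ, ∀ a ∈ J ^ m, u * a ∈ Q * J ^ m → a ∈ Q * J ^ m

/-- Taking `Q = J` in `PowersRegular` and going up the filtration `A ⊇ J ⊇ J² ⊇ ⋯`. -/
lemma PowersRegular.regularMod_pow {A : Type*} [CommRing A] {J : Ideal A}
    (hJ : PowersRegular J) {u : A} (hu : RegularMod J u) (m : ℕ) : RegularMod (J ^ m) u := by
  induction m with
  | zero => intro s _; simp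
  | succ m ih =>
    intro s hs
    rw [pow_succ'] at hs ⊢
    exact hJ J le_rfl u hu m s (ih s ((Ideal.mul_le_right : J * J ^ m ≤ J ^ m) hs)) hs

lemma powersRegular_bot {A : Type*} [CommRing A] : PowersRegular (⊥ : Ideal A) := by
  intro Q _ u hu m a ha hua
  rcases m with _ | m
  · simp only [pow_zero, Ideal.one_eq_top, Ideal.mul_top] at hua ⊢
    exact hu a hua
  · have h0 : a = 0 := by simpa [pow_succ] using ha
    simp [h0]

/-- Elements of `P (J + (f))ᵐ⁺¹` split as `P Jᵐ⁺¹ + f P (J + (f))ᵐ`. -/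
lemma exists_split_of_mem_mul_sup_pow {A : Type*} [CommRing A] (P J : Ideal A) (f : A) (m : ℕ)
    {a : A} (ha : a ∈ P * (J ⊔ Ideal.span {f}) ^ (m + 1)) :
    ∃ b ∈ P * J ^ (m + 1), ∃ c ∈ P * (J ⊔ Ideal.span {f}) ^ m, a = b + f * c := by
  have key : ∀ m, P * (J ⊔ Ideal.span {f}) ^ (m + 1) ≤
      P * J ^ (m + 1) ⊔ Ideal.span {f} * (P * (J ⊔ Ideal.span {f}) ^ m) := by
    intro m
    induction m with
    | zero => simp [Ideal.mul_sup, mul_comm]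
    | succ m ih =>
      calc P * (J ⊔ Ideal.span {f}) ^ (m + 1 + 1)
          = J * (P * (J ⊔ Ideal.span {f}) ^ (m + 1)) ⊔
              Ideal.span {f} * (P * (J ⊔ Ideal.span {f}) ^ (m + 1)) := by
            rw [← Ideal.sup_mul]; ring
        _ ≤ _ := by
            refine sup_le ?_ le_sup_right
            refine (Ideal.mul_mono_right ih).trans ?_
            rw [Ideal.mul_sup]
            refine sup_le_sup (le_of_eq (by ring)) ?_
            calc J * (Ideal.span {f} * (P * (J ⊔ Ideal.span {f}) ^ m))
                = Ideal.span {f} * (P * (J * (J ⊔ Ideal.span {f}) ^ m)) := by ring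
              _ ≤ _ := by
                rw [pow_succ']
                gcongr
                exact le_sup_left
  obtain ⟨b, hb, c', hc', rfl⟩ := Submodule.mem_sup.1 (key m ha)
  obtain ⟨c, hc, rfl⟩ := Ideal.mem_span_singleton_mul.1 hc'
  exact ⟨b, hb, c, hc, rfl⟩

/-- `PowersRegular` is preserved when a regular sequence is extended by one element. -/
lemma PowersRegular.sup_span_singleton {A : Type*} [CommRing A] {J : Ideal A}
    (hJ : PowersRegular J) {f : A} (hf : RegularMod J f) :
    PowersRegular (J ⊔ Ideal.span {f}) := by
  intro Q hQ u hu m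
  have hJQ : J ≤ Q := le_sup_left.trans hQ
  have hfQ : f ∈ Q := hQ (Ideal.mem_sup_right (Ideal.mem_span_singleton_self f))
  have hfI : f ∈ J ⊔ Ideal.span {f} := Ideal.mem_sup_right (Ideal.mem_span_singleton_self f)
  induction m with
  | zero =>
    intro a _ hua
    simp only [pow_zero, Ideal.one_eq_top, Ideal.mul_top] at hua ⊢
    exact hu a hua
  | succ m ih =>
    intro a ha hua
    obtain ⟨b, hb, c, hc, rfl⟩ := exists_split_of_mem_mul_sup_pow ⊤ J f m (by simpa using ha)
    obtain ⟨p, hp, q, hq, hpq⟩ := exists_split_of_mem_mul_sup_pow Q J f m hua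
    simp only [Ideal.top_mul] at hb hc
    -- `f (uc - q) = p - ub` lies in `Jᵐ⁺¹`, and `f` is a nonzerodivisor modulo that power.
    have hr : u * c - q ∈ J ^ (m + 1) := by
      refine hJ.regularMod_pow hf (m + 1) _ ?_
      have e : f * (u * c - q) = p - u * b := by linear_combination hpq
      rw [e]
      exact sub_mem ((Ideal.mul_le_right : Q * J ^ (m + 1) ≤ J ^ (m + 1)) hp) (Ideal.mul_mem_left _ _ hb)
    have hle : J ^ (m + 1) ≤ Q * (J ⊔ Ideal.span {f}) ^ m := by
      rw [pow_succ']
      exact Ideal.mul_mono hJQ (Ideal.pow_right_mono le_sup_left m)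
    have hcQ : c ∈ Q * (J ⊔ Ideal.span {f}) ^ m := by
      refine ih c hc ?_
      have e : u * c = (u * c - q) + q := by ring
      rw [e]
      exact add_mem (hle hr) hq
    have hbQ : b ∈ Q * J ^ (m + 1) := by
      refine hJ Q hJQ u hu (m + 1) b hb ?_
      have e : u * b = p - f * (u * c - q) := by linear_combination hpq
      rw [e]
      exact sub_mem hp (Ideal.mul_mem_mul hfQ hr)
    refine add_mem (Ideal.mul_mono_right (Ideal.pow_right_mono le_sup_left _) hbQ) ?_
    have e : Q * (J ⊔ Ideal.span {f}) ^ (m + 1) =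
        (J ⊔ Ideal.span {f}) * (Q * (J ⊔ Ideal.span {f}) ^ m) := by ring
    rw [e]
    exact Ideal.mul_mem_mul hfI hcQ

/-- If nonzerodivisors modulo `I` stay nonzerodivisors modulo `Iⁿ`, then `I⁽ⁿ⁾ = Iⁿ`: for
`s ∈ I⁽ⁿ⁾` the ideal `(Iⁿ : s)` lies in no associated prime of `A / I`, so by prime avoidance it
contains a nonzerodivisor modulo `I`. -/
lemma symbolicPower_eq_pow_of_regularMod {A : Type*} [CommRing A] [IsNoetherianRing A]
    (I : Ideal A) (n : ℕ) (h : ∀ u, RegularMod I u → RegularMod (I ^ n) u) :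
    symbolicPower I n = I ^ n := by
  refine le_antisymm ?_ ?_
  · intro s hs
    simp only [symbolicPower, Submodule.mem_iInf] at hs
    let L : Ideal A := (I ^ n).colon {s}
    have hL : ∀ u, u ∈ L ↔ u * s ∈ I ^ n := fun u => by
      simp [L, Submodule.mem_colon_singleton]
    have hnot : ¬ ((L : Set A) ⊆ ⋃ p ∈ associatedPrimes A (A ⧸ I), (p : Set A)) := by
      intro hsub
      obtain ⟨p, hp, hLp⟩ := (Ideal.subset_union_prime_finite
        (associatedPrimes.finite A (A ⧸ I)) ⊥ ⊥
        (fun p hp _ _ => IsAssociatedPrime.isPrime hp)).1 hsub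
      have : p.IsPrime := hp.isPrime
      obtain ⟨u, hu, hus⟩ := (IsLocalization.algebraMap_mem_map_algebraMap_iff
        p.primeCompl (Localization.AtPrime p) _ _).1 (hs p hp)
      exact hu (hLp ((hL u).2 hus))
    rw [biUnion_associatedPrimes_eq_compl_regular, Set.not_subset] at hnot
    obtain ⟨u, huL, hu⟩ := hnot
    have hu' : IsSMulRegular (A ⧸ I) u := by simpa using hu
    refine h u (fun t ht => ?_) s ((hL u).1 huL)
    rw [← Ideal.Quotient.eq_zero_iff_mem] at ht ⊢
    exact hu'.right_eq_zero_of_smul (by rw [← ht]; rfl)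
  · simp only [symbolicPower]
    exact le_iInf₂ fun p hp => Ideal.le_comap_map

/-! ### Products of linear forms as a regular sequence -/

/-- The product `∏_{η ∈ Z} (yᵢ - η xᵢ)`. -/
noncomputable def linProd {K : Type*} [Field K] {d : ℕ} (i : Fin d) (Z : Finset K) :
    MvPolynomial (Fin d ⊕ Fin d) K :=
  ∏ η ∈ Z, (X (Sum.inr i) - C η * X (Sum.inl i))

/-- The ideal generated by `∏_{η ∈ Zᵢ} (yᵢ - η xᵢ)` for `i ∈ s`. -/
noncomputable def prodIdeal {K : Type*} [Field K] {d : ℕ} (s : Finset (Fin d))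
    (Z : Fin d → Finset K) : Ideal (MvPolynomial (Fin d ⊕ Fin d) K) :=
  Ideal.span (Set.image (fun i => linProd i (Z i)) (s : Set (Fin d)))

/-- The substitution `yᵢ ↦ ζᵢ xᵢ` for `i ∈ s`, fixing all other variables. -/
noncomputable def substHom {K : Type*} [Field K] {d : ℕ} (s : Finset (Fin d)) (ζ : Fin d → K) :
    MvPolynomial (Fin d ⊕ Fin d) K →ₐ[K] MvPolynomial (Fin d ⊕ Fin d) K :=
  aeval (Sum.elim (fun i => X (Sum.inl i))
    (fun i => if i ∈ s then C (ζ i) * X (Sum.inl i) else X (Sum.inr i)))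

section

variable {K : Type*} [Field K] {d : ℕ}

lemma substHom_linProd_of_mem {s : Finset (Fin d)} {i : Fin d} (hi : i ∈ s) (ζ : Fin d → K)
    (Z : Finset K) :
    substHom s ζ (linProd i Z) = ∏ η ∈ Z, (C (ζ i - η) * X (Sum.inl i)) := by
  simp only [substHom, linProd, map_prod, map_sub, map_mul, aeval_X, Sum.elim_inr, Sum.elim_inl,
    if_pos hi, algHom_C, algebraMap_eq]
  exact Finset.prod_congr rfl fun η _ => by ring

lemma substHom_linProd_of_notMem {s : Finset (Fin d)} {i : Fin d} (hi : i ∉ s) (ζ : Fin d → K)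
    (Z : Finset K) : substHom s ζ (linProd i Z) = linProd i Z := by
  simp [substHom, linProd, map_prod, hi]

lemma linProd_ne_zero (i : Fin d) (Z : Finset K) : linProd i Z ≠ 0 := by
  refine Finset.prod_ne_zero_iff.2 fun η _ h => ?_
  -- Evaluate at `x = 0` and all `y`-coordinates equal to `1`.
  have := congrArg (eval (Sum.elim (fun _ => (0 : K)) (fun _ => 1))) h
  simp at this

lemma prodIdeal_insert {s : Finset (Fin d)} {j : Fin d} (Z : Fin d → Finset K) :
    prodIdeal (insert j s) Z = prodIdeal s Z ⊔ Ideal.span {linProd j (Z j)} := by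
  rw [prodIdeal, prodIdeal, Finset.coe_insert, Set.image_insert_eq, Ideal.span_insert, sup_comm]

lemma prodIdeal_congr {s : Finset (Fin d)} {Z Z' : Fin d → Finset K}
    (h : ∀ i ∈ s, Z i = Z' i) : prodIdeal s Z = prodIdeal s Z' := by
  rw [prodIdeal, prodIdeal]
  congr 1
  exact Set.image_congr fun i hi => by simp only [h i hi]

lemma prodIdeal_update {s : Finset (Fin d)} {j : Fin d} (hj : j ∈ s) (Z : Fin d → Finset K)
    (W : Finset K) :
    prodIdeal s (Function.update Z j W) =
      prodIdeal (s.erase j) Z ⊔ Ideal.span {linProd j W} := by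
  conv_lhs => rw [← Finset.insert_erase hj]
  rw [prodIdeal_insert, Function.update_self]
  congr 1
  exact prodIdeal_congr fun i hi => Function.update_of_ne (Finset.ne_of_mem_erase hi) _ _

lemma substHom_eq_zero_of_mem {s : Finset (Fin d)} {Z : Fin d → Finset K}
    {f : MvPolynomial (Fin d ⊕ Fin d) K} (hf : f ∈ prodIdeal s Z) {ζ : Fin d → K}
    (hζ : ∀ i ∈ s, ζ i ∈ Z i) : substHom s ζ f = 0 := by
  have hle : prodIdeal s Z ≤ RingHom.ker (substHom s ζ) := by
    rw [prodIdeal, Ideal.span_le]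
    rintro _ ⟨i, hi, rfl⟩
    change substHom s ζ (linProd i (Z i)) = 0
    rw [substHom_linProd_of_mem hi]
    exact Finset.prod_eq_zero (hζ i hi) (by simp)
  exact hle hf

/-- Modulo the linear forms `yᵢ - ζᵢ xᵢ` for `i ∈ s`, the substitution `yᵢ ↦ ζᵢ xᵢ` is the
identity. -/
lemma sub_substHom_mem (s : Finset (Fin d)) (ζ : Fin d → K)
    (f : MvPolynomial (Fin d ⊕ Fin d) K) :
    f - substHom s ζ f ∈ prodIdeal s (fun i => {ζ i}) := by
  rw [← Ideal.Quotient.mk_eq_mk_iff_sub_mem]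
  have h : (Ideal.Quotient.mkₐ K (prodIdeal s (fun i => {ζ i}))) =
      (Ideal.Quotient.mkₐ K (prodIdeal s (fun i => {ζ i}))).comp (substHom s ζ) := by
    refine MvPolynomial.algHom_ext fun i => ?_
    rcases i with i | i
    · simp [substHom]
    · by_cases hi : i ∈ s
      · simp only [substHom, AlgHom.comp_apply, aeval_X, Sum.elim_inr, if_pos hi,
          Ideal.Quotient.mkₐ_eq_mk]
        rw [Ideal.Quotient.mk_eq_mk_iff_sub_mem]
        exact Ideal.subset_span ⟨i, hi, by simp [linProd]⟩
      · simp [substHom, hi]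
  exact DFunLike.congr_fun h f

/-- The ideal of the products `∏_{η ∈ Zᵢ} (yᵢ - η xᵢ)`, `i ∈ s`, is the intersection of the linear
primes `(yᵢ - ζᵢ xᵢ : i ∈ s)`, the kernels of the substitutions, over all `ζ ∈ ∏ᵢ Zᵢ`. The
induction splits one factor off a product with at least two of them, using
`(L + (g)) ∩ (L + (h)) = L + (gh)` when `h` is a nonzerodivisor modulo `L + (g)`. -/
lemma mem_prodIdeal_iff (s : Finset (Fin d)) (Z : Fin d → Finset K)
    (f : MvPolynomial (Fin d ⊕ Fin d) K) :
    f ∈ prodIdeal s Z ↔ ∀ ζ : Fin d → K, (∀ i ∈ s, ζ i ∈ Z i) → substHom s ζ f = 0 := by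
  classical
  refine ⟨fun hf ζ hζ => substHom_eq_zero_of_mem hf hζ, ?_⟩
  induction hN : ∑ i ∈ s, (Z i).card using Nat.strong_induction_on generalizing Z f with
  | _ N ih =>
  intro hf
  by_cases hempty : ∃ i ∈ s, Z i = ∅
  · obtain ⟨i, hi, hZ⟩ := hempty
    have h1 : (1 : MvPolynomial (Fin d ⊕ Fin d) K) ∈ prodIdeal s Z :=
      Ideal.subset_span ⟨i, hi, by simp [linProd, hZ]⟩
    rw [(Ideal.eq_top_iff_one _).2 h1]
    trivial
  push Not at hempty
  by_cases hbig : ∃ j ∈ s, 1 < (Z j).card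
  · obtain ⟨j, hj, hcard⟩ := hbig
    obtain ⟨η, hη⟩ := Finset.card_pos.1 (zero_lt_one.trans hcard)
    have hsmall : ∀ W : Finset K, W.card < (Z j).card →
        ∑ i ∈ s, (Function.update Z j W i).card < N := by
      intro W hW
      rw [← hN]
      refine Finset.sum_lt_sum (fun i _ => ?_) ⟨j, hj, by simpa using hW⟩
      by_cases hij : i = j
      · subst hij; simpa using hW.le
      · simp [hij]
    have hsub : ∀ W : Finset K, W ⊆ Z j → ∀ ζ : Fin d → K,
        (∀ i ∈ s, ζ i ∈ Function.update Z j W i) → ∀ i ∈ s, ζ i ∈ Z i := by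
      intro W hW ζ hζ i hi
      have := hζ i hi
      by_cases hij : i = j
      · subst hij; exact hW (by simpa using this)
      · simpa [hij] using this
    have hc1 : ({η} : Finset K).card < (Z j).card := by simpa using hcard
    have hc2 : ((Z j).erase η).card < (Z j).card := Finset.card_erase_lt_of_mem hη
    have hf2 : f ∈ prodIdeal s (Function.update Z j ((Z j).erase η)) :=
      ih _ (hsmall _ hc2) _ _ rfl fun ζ hζ =>
        hf ζ (hsub _ (Finset.erase_subset _ _) ζ hζ)
    rw [prodIdeal_update hj] at hf2
    obtain ⟨l, hl, t, ht, rfl⟩ := Submodule.mem_sup.1 hf2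
    obtain ⟨b, rfl⟩ := Ideal.mem_span_singleton.1 ht
    -- The cofactor `b` vanishes under every substitution with `ζⱼ = η`.
    have hb : b ∈ prodIdeal s (Function.update Z j {η}) := by
      refine ih _ (hsmall _ hc1) _ _ rfl fun ζ hζ => ?_
      have hζZ := hsub _ (by simpa using hη) ζ hζ
      have hζj : ζ j = η := by simpa using hζ j hj
      have h0 := hf ζ hζZ
      have hl0 : substHom s ζ l = 0 := by
        refine substHom_eq_zero_of_mem (Z := Z) (Ideal.span_mono ?_ hl) hζZ
        exact Set.image_mono (by simp)
      rw [map_add, hl0, zero_add, map_mul, substHom_linProd_of_mem hj] at h0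
      refine (mul_eq_zero.1 h0).resolve_left (Finset.prod_ne_zero_iff.2 fun η' hη' => ?_)
      refine mul_ne_zero ?_ (X_ne_zero _)
      rw [Ne, C_eq_zero, sub_eq_zero, hζj]
      exact fun h => Finset.ne_of_mem_erase hη' h.symm
    rw [prodIdeal_update hj] at hb
    obtain ⟨l', hl', t', ht', rfl⟩ := Submodule.mem_sup.1 hb
    obtain ⟨c, rfl⟩ := Ideal.mem_span_singleton.1 ht'
    have hZ : prodIdeal s Z = prodIdeal (s.erase j) Z ⊔ Ideal.span {linProd j (Z j)} := by
      rw [← prodIdeal_update hj, Function.update_eq_self]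
    have hprod : linProd j (Z j) = linProd j {η} * linProd j ((Z j).erase η) := by
      rw [linProd, ← Finset.mul_prod_erase _ _ hη]
      simp [linProd]
    rw [hZ]
    have e : l + linProd j ((Z j).erase η) * (l' + linProd j {η} * c) =
        (l + linProd j ((Z j).erase η) * l') + linProd j (Z j) * c := by
      rw [hprod]; ring
    rw [e]
    exact add_mem (Ideal.mem_sup_left (add_mem hl (Ideal.mul_mem_left _ _ hl')))
      (Ideal.mem_sup_right (Ideal.mul_mem_right _ _ (Ideal.mem_span_singleton_self _)))
  · push Not at hbig
    have hone : ∀ i ∈ s, ∃ z, Z i = {z} := fun i hi =>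
      Finset.card_eq_one.1 (le_antisymm (hbig i hi)
        (Finset.card_pos.2 (hempty i hi)))
    choose! ζ hζ using hone
    have h := sub_substHom_mem s ζ f
    rw [hf ζ fun i hi => by rw [hζ i hi]; simp, sub_zero] at h
    rwa [prodIdeal_congr hζ]

lemma powersRegular_prodIdeal (s : Finset (Fin d)) (Z : Fin d → Finset K) :
    PowersRegular (prodIdeal s Z) := by
  classical
  induction s using Finset.induction_on with
  | empty =>
    have : prodIdeal ∅ Z = ⊥ := by simp [prodIdeal]
    rw [this]
    exact powersRegular_bot
  | insert j s hj ih =>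
    rw [prodIdeal_insert]
    refine ih.sup_span_singleton fun t ht => ?_
    rw [mem_prodIdeal_iff] at ht ⊢
    intro ζ hζ
    have h0 := ht ζ hζ
    rw [map_mul, substHom_linProd_of_notMem hj] at h0
    exact (mul_eq_zero.1 h0).resolve_left (linProd_ne_zero _ _)

end

/-! ### The diagonal matrices of the action -/

/-- The diagonal matrices `ζ` realised by the action: `g(x_j) = ζ_j x_j` for some `g ∈ G`. -/
def diagSubmonoid (K : Type*) [Field K] (d : ℕ) (G : Type*) [Group G]
    [MulSemiringAction G (MvPolynomial (Fin d) K)]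
    (hC : ∀ (g : G) (c : K), g • (C c : MvPolynomial (Fin d) K) = C c) :
    Submonoid (Fin d → K) where
  carrier := {ζ | ∃ g : G, ∀ j, g • (X j : MvPolynomial (Fin d) K) = C (ζ j) * X j}
  one_mem' := ⟨1, fun j => by simp⟩
  mul_mem' := by
    rintro ζ ξ ⟨g, hg⟩ ⟨h, hh⟩
    refine ⟨g * h, fun j => ?_⟩
    rw [mul_smul, hh, smul_mul', hC, hg, Pi.mul_apply, C_mul]
    ring

lemma eq_of_C_mul_X_eq {K : Type*} [Field K] {d : ℕ} {ζ ξ : Fin d → K}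
    (h : ∀ j, (C (ζ j) * X j : MvPolynomial (Fin d) K) = C (ξ j) * X j) : ζ = ξ :=
  by
  funext j
  have hC : (C (ζ j) : MvPolynomial (Fin d) K) = C (ξ j) :=
    mul_right_cancel₀ (X_ne_zero j) (h j)
  exact C_injective (Fin d) K hC

lemma inv_smul_X_eq {K : Type*} [Field K] {d : ℕ} {G : Type*} [Group G]
    [MulSemiringAction G (MvPolynomial (Fin d) K)]
    (hC : ∀ (g : G) (c : K), g • (C c : MvPolynomial (Fin d) K) = C c)
    {g : G} {ζ : Fin d → K}
    (hg : ∀ j, g • (X j : MvPolynomial (Fin d) K) = C (ζ j) * X j) (j : Fin d) :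
    g⁻¹ • (X j : MvPolynomial (Fin d) K) = C ((ζ j)⁻¹) * X j := by
  have hne : ζ j ≠ 0 := by
    intro h0
    have h1 := hg j
    rw [h0, C_0, zero_mul, smul_eq_zero_iff_eq] at h1
    exact X_ne_zero j h1
  rw [inv_smul_eq_iff, smul_mul', hC, hg, ← mul_assoc, ← C_mul, inv_mul_cancel₀ hne, C_1, one_mul]

/-- For the diagonal action of `G = ⟨g₁, …, g_a⟩` on `K[x₁, …, x_d]`, where
`gᵢ(x_j) = x_j` for `j ≠ i` and `gᵢ(xᵢ) = ωᵢ xᵢ` with `ωᵢ` a primitive `dᵢ`-th root of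
unity, the symbolic powers of the Derksen ideal coincide with its ordinary powers. -/
theorem symbolicPower_derksenIdeal_diagonal {K : Type*} [Field K] [IsAlgClosed K]
    (d a : ℕ) (ha : a ≤ d) (G : Type*) [Group G] [Finite G]
    [MulSemiringAction G (MvPolynomial (Fin d) K)]
    (gen : Fin a → G) (hgen : Subgroup.closure (Set.range gen) = ⊤)
    (di : Fin a → ℕ) (hdi : ∀ i, 1 ≤ di i)
    (ω : Fin a → K) (hω : ∀ i, IsPrimitiveRoot (ω i) (di i))
    (hC : ∀ (g : G) (c : K), g • (C c : MvPolynomial (Fin d) K) = C c)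
    (hact : ∀ (i : Fin a) (j : Fin d),
      gen i • (X j : MvPolynomial (Fin d) K) =
        if j = Fin.castLE ha i then C (ω i) * X j else X j)
    (n : ℕ) (hn : 1 ≤ n) :
    symbolicPower (derksenIdeal K d G) n = derksenIdeal K d G ^ n := by
  classical
  let H := diagSubmonoid K d G hC
  -- Every `g` acts diagonally, and each single-coordinate part of its matrix is realised too.
  have hdiag : ∀ g : G, ∃ ζ : Fin d → K,
      (∀ j, g • (X j : MvPolynomial (Fin d) K) = C (ζ j) * X j) ∧
      ∀ j, Pi.mulSingle j (ζ j) ∈ H := by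
    intro g
    have hg : g ∈ Subgroup.closure (Set.range gen) := hgen ▸ Subgroup.mem_top g
    induction hg using Subgroup.closure_induction with
    | mem x hx =>
      obtain ⟨i, rfl⟩ := hx
      have hζ : ∀ j, gen i • (X j : MvPolynomial (Fin d) K) =
          C ((Pi.mulSingle (Fin.castLE ha i) (ω i) : Fin d → K) j) * X j := by
        intro j
        rw [hact]
        by_cases hj : j = Fin.castLE ha i
        · subst hj; simp
        · simp [hj]
      refine ⟨_, hζ, fun j => ?_⟩
      by_cases hj : j = Fin.castLE ha i
      · subst hj
        rw [Pi.mulSingle_eq_same]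
        exact ⟨gen i, hζ⟩
      · rw [Pi.mulSingle_eq_of_ne hj, Pi.mulSingle_one]
        exact H.one_mem
    | one => exact ⟨1, fun j => by simp, fun j => by simp⟩
    | mul x y _ _ hx hy =>
      obtain ⟨ζ, hζ, hζH⟩ := hx
      obtain ⟨ξ, hξ, hξH⟩ := hy
      refine ⟨ζ * ξ, fun j => ?_, fun j => ?_⟩
      · rw [mul_smul, hξ, smul_mul', hC, hζ, Pi.mul_apply, C_mul]
        ring
      · rw [Pi.mul_apply, Pi.mulSingle_mul]
        exact H.mul_mem (hζH j) (hξH j)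
    | inv x _ hx =>
      obtain ⟨ζ, hζ, hζH⟩ := hx
      refine ⟨ζ⁻¹, inv_smul_X_eq hC hζ, fun j => ?_⟩
      obtain ⟨g, hg⟩ := hζH j
      refine ⟨g⁻¹, fun i => ?_⟩
      rw [inv_smul_X_eq hC hg]
      by_cases hij : i = j
      · subst hij; simp
      · simp [hij]
  choose χ hχ hχH using hdiag
  have := Fintype.ofFinite G
  let Z : Fin d → Finset K := fun j => Finset.univ.image fun g : G => χ g j
  have hI : derksenIdeal K d G = prodIdeal Finset.univ Z := by
    have hcomp : ∀ g : G, derksenComponent K d g = prodIdeal Finset.univ fun i => {χ g i} := by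
      intro g
      rw [derksenComponent, prodIdeal, Finset.coe_univ, Set.image_univ]
      simp [linProd, hχ]
    ext f
    rw [derksenIdeal, Submodule.mem_iInf, mem_prodIdeal_iff]
    constructor
    · intro h ζ hζ
      -- `ζ` is the product of its single-coordinate parts, each realised by the action.
      have hζH : ζ ∈ H := by
        rw [← Finset.univ_prod_mulSingle ζ]
        refine H.prod_mem fun j _ => ?_
        obtain ⟨g, -, hg⟩ := Finset.mem_image.1 (hζ j (Finset.mem_univ j))
        rw [← hg]
        exact hχH g j
      obtain ⟨g, hg⟩ := hζH
      have hζg : ζ = χ g := eq_of_C_mul_X_eq fun j => (hg j).symm.trans (hχ g j)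
      have hf := h g
      rw [hcomp] at hf
      exact substHom_eq_zero_of_mem hf fun i _ => by simp [hζg]
    · intro h g
      rw [hcomp, mem_prodIdeal_iff]
      intro ζ hζ
      exact h ζ fun i hi => Finset.mem_image.2
        ⟨g, Finset.mem_univ g, (Finset.mem_singleton.1 (hζ i hi)).symm⟩
  rw [hI]
  exact symbolicPower_eq_pow_of_regularMod _ n fun u hu =>
    (powersRegular_prodIdeal Finset.univ Z).regularMod_pow hu n
end

section
/- Let K be an algebraically closed field, R = K[x_1, ..., x_d] a polynomial ring, and G a finite group acting linearly on R. Let S = K[x_1, ..., x_d, y_1, ..., y_d]. Then the Derksen ideal I_G equals the radical of the ideal of S generated by { f(x_1, ..., x_d) − f(y_1, ..., y_d) : f ∈ R^G }, where R^G is the ring of G-invariant polynomials. -/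
/-!
The component of the Derksen ideal at `g` is the kernel of the map `S → R`, `x ↦ x`, `y ↦ g(x)`
(`derksenComponent_eq_ker`). It is therefore a prime ideal, and it contains `f(x) - f(y)` for every
invariant `f`; hence it contains the radical of the ideal `J` generated by these elements.

Conversely, let `P` be a prime containing `J`. The maps `α, β : R → S ⧸ P` given by `f ↦ f(x)` and
`f ↦ f(y)` agree on `R^G`. The coefficients of `∏_g (T - ∑ tᵢ g(xᵢ))` are invariant, so `α` and `β`
send this polynomial to the same one. The image under `β` vanishes at `T = ∑ tᵢ β(xᵢ)`, because of
the factor `g = 1`, so some factor of the image under `α` vanishes there as well: this gives a `g`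
with `β(xᵢ) = α(g(xᵢ))` for all `i` (`exists_forall_eq_smul`). So `P` contains the component at `g`,
and thus the Derksen ideal. Intersecting over all `P` proves the other inclusion.
-/

open MvPolynomial

/-- The polynomial `∏_g (T - ∑ tᵢ g(xᵢ))` over `R`, in the variables `T = X none` and
`tᵢ = X (some i)`. -/
noncomputable def orbitForm {R G : Type*} [CommRing R] [Group G] [Fintype G]
    [MulSemiringAction G R] {d : ℕ} (x : Fin d → R) : MvPolynomial (Option (Fin d)) R :=
  ∏ g : G, (X none - ∑ i, C (g • x i) * X (some i))

lemma smul_coeff_orbitForm {R G : Type*} [CommRing R] [Group G] [Fintype G]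
    [MulSemiringAction G R] {d : ℕ} (x : Fin d → R) (h : G) (m : Option (Fin d) →₀ ℕ) :
    h • (orbitForm (G := G) x).coeff m = (orbitForm (G := G) x).coeff m := by
  have key : MvPolynomial.map (MulSemiringAction.toRingHom G R h) (orbitForm (G := G) x) =
      orbitForm (G := G) x := by
    simp only [orbitForm, map_prod, map_sub, map_sum, map_mul, map_X, map_C,
      MulSemiringAction.toRingHom_apply, smul_smul]
    exact Fintype.prod_equiv (Equiv.mulLeft h) _ _ fun g => rfl
  conv_rhs => rw [← key, coeff_map]
  rfl

/-- Two homomorphisms into a domain that agree on the invariants differ, on any finite family,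
by an element of the group. -/
lemma exists_forall_eq_smul {R G D : Type*} [CommRing R] [Group G] [Finite G]
    [MulSemiringAction G R] [CommRing D] [IsDomain D] (α β : R →+* D)
    (hαβ : ∀ f : R, (∀ g : G, g • f = f) → α f = β f) {d : ℕ} (x : Fin d → R) :
    ∃ g : G, ∀ i, β (x i) = α (g • x i) := by
  classical
  have := Fintype.ofFinite G
  have hmap : MvPolynomial.map α (orbitForm (G := G) x) =
      MvPolynomial.map β (orbitForm (G := G) x) := by
    ext m
    simp only [coeff_map]
    exact hαβ _ fun g => smul_coeff_orbitForm x g m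
  -- the substitution `T = ∑ tᵢ β(xᵢ)`
  let ε : MvPolynomial (Option (Fin d)) D →+* MvPolynomial (Fin d) D :=
    eval₂Hom C fun o => o.elim (∑ i, C (β (x i)) * X i) X
  have hε : ∀ γ : R →+* D, ε (MvPolynomial.map γ (orbitForm (G := G) x)) =
      ∏ g : G, (∑ i, C (β (x i)) * X i - ∑ i, C (γ (g • x i)) * X i) := by
    intro γ
    simp [ε, orbitForm, map_prod]
  have hzero := hε β
  have hβ : ∏ g : G, ((∑ i, C (β (x i)) * X i : MvPolynomial (Fin d) D) -
      ∑ i, C (β (g • x i)) * X i) = 0 :=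
    Finset.prod_eq_zero (Finset.mem_univ (1 : G)) (by simp)
  rw [← hmap, hε α, hβ, Finset.prod_eq_zero_iff] at hzero
  obtain ⟨g, -, hg⟩ := hzero
  refine ⟨g, fun i => ?_⟩
  have := congrArg (coeff (Finsupp.single i 1)) (sub_eq_zero.mp hg)
  simpa [coeff_sum, coeff_C_mul, coeff_X, Finsupp.single_left_inj] using this

/-- The map `S → R` with `x ↦ x` and `y ↦ g(x)`. -/
noncomputable def derksenEval (K : Type*) [Field K] (d : ℕ) {G : Type*} [Group G]
    [MulSemiringAction G (MvPolynomial (Fin d) K)] (g : G) :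
    MvPolynomial (Fin d ⊕ Fin d) K →ₐ[K] MvPolynomial (Fin d) K :=
  aeval (Sum.elim X fun i => g • (X i : MvPolynomial (Fin d) K))

lemma derksenEval_rename_inl {K : Type*} [Field K] {d : ℕ} {G : Type*} [Group G]
    [MulSemiringAction G (MvPolynomial (Fin d) K)] (g : G) (f : MvPolynomial (Fin d) K) :
    derksenEval K d g (rename Sum.inl f) = f := by
  rw [derksenEval, aeval_rename, Sum.elim_comp_inl, aeval_X_left_apply]

lemma derksenComponent_eq_ker {K : Type*} [Field K] {d : ℕ} {G : Type*} [Group G]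
    [MulSemiringAction G (MvPolynomial (Fin d) K)] (g : G) :
    derksenComponent K d g = RingHom.ker (derksenEval K d g) := by
  apply le_antisymm
  · rw [derksenComponent, Ideal.span_le]
    rintro _ ⟨i, rfl⟩
    simp only [SetLike.mem_coe, RingHom.mem_ker, map_sub, derksenEval_rename_inl]
    simp [derksenEval]
  · -- modulo the component, every `p` is congruent to its image under `derksenEval`
    have hcong : (Ideal.Quotient.mkₐ K (derksenComponent K d g)) =
        ((Ideal.Quotient.mkₐ K (derksenComponent K d g)).comp (rename Sum.inl)).comp
          (derksenEval K d g) := by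
      apply MvPolynomial.algHom_ext
      rintro (i | i)
      · simp [derksenEval]
      · simp only [AlgHom.comp_apply, Ideal.Quotient.mkₐ_eq_mk, derksenEval, aeval_X, Sum.elim_inr]
        exact Ideal.Quotient.eq.mpr (Ideal.subset_span ⟨i, rfl⟩)
    intro p hp
    rw [← Ideal.Quotient.eq_zero_iff_mem, ← Ideal.Quotient.mkₐ_eq_mk K, hcong]
    simp [AlgHom.comp_apply, (RingHom.mem_ker).mp hp]

/-- Over an algebraically closed field, the Derksen ideal equals the radical of the ideal
generated by `{ f(x) - f(y) : f ∈ R^G }`. -/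
theorem derksenIdeal_eq_radical_span_invariants {K : Type*} [Field K] [IsAlgClosed K]
    (d : ℕ) (G : Type*) [Group G] [Finite G]
    [MulSemiringAction G (MvPolynomial (Fin d) K)]
    (hC : ∀ (g : G) (c : K), g • (C c : MvPolynomial (Fin d) K) = C c)
    (hlin : ∀ (g : G) (i : Fin d), (g • (X i : MvPolynomial (Fin d) K)).IsHomogeneous 1) :
    derksenIdeal K d G =
      (Ideal.span {p : MvPolynomial (Fin d ⊕ Fin d) K |
        ∃ f : MvPolynomial (Fin d) K, (∀ g : G, g • f = f) ∧
          p = rename Sum.inl f - rename Sum.inr f}).radical := by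
  apply le_antisymm
  · rw [Ideal.radical_eq_sInf]
    refine le_sInf ?_
    rintro P ⟨hJP, hP⟩
    obtain ⟨g, hg⟩ := exists_forall_eq_smul (G := G)
      ((Ideal.Quotient.mk P).comp (rename (R := K) Sum.inl).toRingHom)
      ((Ideal.Quotient.mk P).comp (rename (R := K) Sum.inr).toRingHom)
      (fun f hf => Ideal.Quotient.eq.mpr (hJP (Ideal.subset_span ⟨f, hf, rfl⟩)))
      (fun i : Fin d => (X i : MvPolynomial (Fin d) K))
    refine (iInf_le _ g).trans ?_
    rw [derksenComponent, Ideal.span_le]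
    rintro _ ⟨i, rfl⟩
    simpa using Ideal.Quotient.eq.mp (hg i)
  · refine le_iInf fun g => ?_
    rw [derksenComponent_eq_ker]
    refine (RingHom.ker_isPrime (derksenEval K d g)).isRadical.radical_le_iff.mpr ?_
    rw [Ideal.span_le]
    rintro _ ⟨f, hf, rfl⟩
    -- `f(y) ↦ g(f)`, since the action fixes the constants
    have hy : ((derksenEval K d g).comp (rename Sum.inr)).toRingHom =
        MulSemiringAction.toRingHom G (MvPolynomial (Fin d) K) g := by
      apply MvPolynomial.ringHom_ext
      · intro c
        simp [hC]
      · intro i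
        simp [derksenEval]
    have hyf : derksenEval K d g (rename Sum.inr f) = g • f := RingHom.congr_fun hy f
    simp [RingHom.mem_ker, hyf, derksenEval_rename_inl, hf g]
end

section
/- Let K be an algebraically closed field and S = K[x_1, ..., x_d, y_1, ..., y_d]. Fix 0 ≤ a ≤ d and integers d_1, ..., d_a ≥ 1 such that the characteristic of K does not divide any d_i. Then the ideal J_a = (y_1^{d_1} − x_1^{d_1}, ..., y_a^{d_a} − x_a^{d_a}, y_{a+1} − x_{a+1}, ..., y_d − x_d) is a radical ideal of S. -/
/-!
Write `eᵢ` for the exponent of the `i`-th generator, so `eᵢ = dᵢ` or `eᵢ = 1`; in either case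
`eᵢ ≠ 0` in `K`, and `K` contains `eᵢ` distinct `eᵢ`-th roots of unity. View `S` as the polynomial
ring `B[x₁, …, x_d]` over the domain `B = K[y₁, …, y_d]`. Up to sign the `i`-th generator is
`∏_ζ (xᵢ - ζ yᵢ)`, which is the monic polynomial in `xᵢ` vanishing exactly on the finite set
`Tᵢ = {ζ yᵢ} ⊆ B`. If a power of `f` lies in the ideal, then `f` vanishes on the grid `∏ Tᵢ`,
because `B` is reduced; Alon's combinatorial Nullstellensatz
(`combinatorial_nullstellensatz_exists_linearCombination`) then writes `f` as a combination of
the generators.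
-/

open MvPolynomial

/-- The factorization of `x ^ n - y ^ n` in a domain over `K`, with the roots of unity taken in
`K` itself. -/
lemma pow_sub_pow_eq_prod_algebraMap {K A : Type*} [Field K] [CommRing A] [IsDomain A]
    [Algebra K A] {n : ℕ} (hn : 0 < n) {ζ : K} (h : IsPrimitiveRoot ζ n) (x y : A) :
    x ^ n - y ^ n =
      ∏ μ ∈ Polynomial.nthRootsFinset n (1 : K), (x - algebraMap K A μ * y) := by
  have hinj := FaithfulSMul.algebraMap_injective K A
  have h' : IsPrimitiveRoot (algebraMap K A ζ) n := h.map_of_injective hinj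
  rw [h'.pow_sub_pow_eq_prod_sub_mul _ _ hn]
  -- Both rings contain exactly `n` roots of unity of order dividing `n`.
  have hsurj := Set.surj_on_of_inj_on_of_ncard_le
    (s := Polynomial.nthRootsFinset n (1 : K)) (t := Polynomial.nthRootsFinset n (1 : A))
    (fun a _ => algebraMap K A a)
    (fun _ hr => Polynomial.map_mem_nthRootsFinset_one hr _)
    (fun _ _ _ _ H => hinj H)
    (by simp [h.card_nthRootsFinset, h'.card_nthRootsFinset])
  refine (Finset.prod_nbij (algebraMap K A)
    (fun a ha => Polynomial.map_mem_nthRootsFinset_one ha _)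
    (fun a _ b _ H => hinj H) (fun a ha => ?_) (fun _ _ => rfl)).symm
  obtain ⟨z, hz, hz'⟩ := hsurj a ha
  exact ⟨z, hz, hz'.symm⟩

/-- The uniform version of the theorem: one exponent `e i`, nonzero in `K`, for each pair of
variables. -/
lemma isRadical_span_pow_sub_pow {K σ : Type*} [Field K] [IsAlgClosed K] [Finite σ]
    (e : σ → ℕ) (he : ∀ i, (e i : K) ≠ 0) :
    (Ideal.span (Set.range fun i : σ =>
      (X (Sum.inr i) : MvPolynomial (σ ⊕ σ) K) ^ e i - X (Sum.inl i) ^ e i)).IsRadical := by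
  classical
  have hpos : ∀ i, 0 < e i := fun i => Nat.pos_of_ne_zero fun h => he i (by simp [h])
  have hprim : ∀ i, ∃ ζ : K, IsPrimitiveRoot ζ (e i) := fun i =>
    have : NeZero (e i : K) := ⟨he i⟩
    HasEnoughRootsOfUnity.exists_primitiveRoot K (e i)
  choose ζ hζ using hprim
  set J := Ideal.span (Set.range fun i : σ =>
      (X (Sum.inr i) : MvPolynomial (σ ⊕ σ) K) ^ e i - X (Sum.inl i) ^ e i) with hJ
  let φ := sumAlgEquiv K σ σ
  let T : σ → Finset (MvPolynomial σ K) := fun i =>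
    (Polynomial.nthRootsFinset (e i) (1 : K)).image fun μ => C μ * X i
  have hT : ∀ i, ∏ r ∈ T i, (X i - C r : MvPolynomial σ (MvPolynomial σ K)) =
      φ (X (Sum.inl i) ^ e i - X (Sum.inr i) ^ e i) := by
    intro i
    rw [Finset.prod_image]
    · rw [map_sub, map_pow, map_pow, sumAlgEquiv_X_inl, sumAlgEquiv_X_inr,
        pow_sub_pow_eq_prod_algebraMap (hpos i) (hζ i)]
      refine Finset.prod_congr rfl fun μ _ => ?_
      rw [C_mul]
      rfl
    · intro μ _ ν _ h
      exact C_injective _ _ (mul_right_cancel₀ (X_ne_zero i) h)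
  rintro f ⟨n, hn⟩
  have hzero : ∀ t : σ → MvPolynomial σ K, (∀ i, t i ∈ T i) → eval t (φ f) = 0 := by
    intro t ht
    let ψ : MvPolynomial (σ ⊕ σ) K →+* MvPolynomial σ K := (eval t).comp φ.toRingEquiv.toRingHom
    have hle : J ≤ RingHom.ker ψ := by
      rw [hJ, Ideal.span_le]
      rintro _ ⟨i, rfl⟩
      obtain ⟨μ, hμ, hti⟩ := Finset.mem_image.mp (ht i)
      rw [Polynomial.mem_nthRootsFinset (hpos i)] at hμ
      change eval t (φ _) = 0
      simp only [φ, map_sub, map_pow, sumAlgEquiv_X_inl, sumAlgEquiv_X_inr, eval_X, eval_C]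
      rw [← hti, mul_pow, ← C_pow, hμ, C_1, one_mul, sub_self]
    have h0 : ψ (f ^ n) = 0 := hle hn
    rw [map_pow] at h0
    exact eq_zero_of_pow_eq_zero h0
  obtain ⟨h, -, hf⟩ := combinatorial_nullstellensatz_exists_linearCombination T
    (fun i => ⟨_, Finset.mem_image_of_mem _ (Polynomial.one_mem_nthRootsFinset (hpos i))⟩)
    (φ f) hzero
  rw [Finsupp.linearCombination_apply, Finsupp.sum] at hf
  rw [← φ.symm_apply_apply f, hf, map_sum]
  refine Ideal.sum_mem _ fun i _ => ?_
  rw [smul_eq_mul, map_mul, hT, φ.symm_apply_apply]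
  refine Ideal.mul_mem_left _ _ ?_
  rw [← neg_sub]
  exact J.neg_mem (Ideal.subset_span ⟨i, rfl⟩)

/-- In `S = K[x₁, …, x_d, y₁, …, y_d]` over an algebraically closed field (the
`x`-variables indexed by `Sum.inl`, the `y`-variables by `Sum.inr`), with `a ≤ d` and
`d₁, …, d_a ≥ 1` not divisible by the characteristic of `K`, the ideal
`J_a = (y₁^{d₁} - x₁^{d₁}, …, y_a^{d_a} - x_a^{d_a}, y_{a+1} - x_{a+1}, …, y_d - x_d)`
is radical. -/
theorem span_diagonal_differences_isRadical {K : Type*} [Field K] [IsAlgClosed K]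
    (d a : ℕ) (ha : a ≤ d) (di : Fin a → ℕ) (hdi : ∀ i, 1 ≤ di i)
    (hchar : ∀ i, ¬ (ringChar K ∣ di i)) :
    (Ideal.span (Set.range fun i : Fin d =>
      if h : (i : ℕ) < a then
        (X (Sum.inr i) : MvPolynomial (Fin d ⊕ Fin d) K) ^ di ⟨i, h⟩ -
          X (Sum.inl i) ^ di ⟨i, h⟩
      else
        X (Sum.inr i) - X (Sum.inl i))).IsRadical := by
  have key := isRadical_span_pow_sub_pow (K := K)
    (fun i : Fin d => if h : (i : ℕ) < a then di ⟨i, h⟩ else 1) (fun i => by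
      split_ifs with h
      · exact fun h0 => hchar _ ((ringChar.spec K _).mp h0)
      · simp)
  convert key using 5 with i
  split_ifs <;> simp
end

section
/- Let K be an algebraically closed field, R = K[x_1, ..., x_d] with a linear action of G = ⟨g_1, ..., g_a⟩, a ≤ d, given by g_i(x_j) = x_j for j ≠ i and g_i(x_i) = ω_i x_i, where ω_i ∈ K is a primitive d_i-th root of unity with d_i ≥ 1. Then in S = K[x_1, ..., x_d, y_1, ..., y_d] the Derksen ideal satisfies I_G = (y_1^{d_1} − x_1^{d_1}, ..., y_a^{d_a} − x_a^{d_a}, y_{a+1} − x_{a+1}, ..., y_d − x_d); in particular, I_G is generated by a regular sequence. -/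
/-!
Write `S = K[x, y]`, put `e i = d_i`, `ζ i = ω_i` for `i ≤ a` and `e i = 1`, `ζ i = 1` for `i > a`.
Then every generator is `y_i ^ e_i - x_i ^ e_i = ∏ (y_i - η x_i)`, with `η` running over the `e_i`-th
roots of unity, which are the powers of the primitive root `ζ_i`.

The central fact is `mem_span_of_forall_subst_eq_zero`: for a set `T` of indices, a polynomial that
vanishes under all substitutions `y_j ↦ ζ_j ^ k_j x_j` (`j ∈ T`) lies in the ideal generated by
`y_j ^ e_j - x_j ^ e_j` (`j ∈ T`). It is the Combinatorial Nullstellensatz over the domain `S`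
for the grid whose `j`-th side is `{η x_j}` if `j ∈ T` and `{y_j}` otherwise.

* With `T` everything, it gives `I_G ⊆ (y_i ^ e_i - x_i ^ e_i)`: each such substitution has the form
  `y_j ↦ g(x_j)` for some `g ∈ G` (`exists_smul_X_eq`), so it kills `I_G`. Conversely each `g ∈ G`
  multiplies `x_j` by an `e_j`-th root of unity (`exists_root_smul_X_eq`), so that
  `y_j - g(x_j)` divides `y_j ^ e_j - x_j ^ e_j`.
* With `T = {j | j < i}`, it gives regularity: such a substitution kills the earlier generators and
  fixes the nonzero polynomial `y_i ^ e_i - x_i ^ e_i`, hence, `S` being a domain, it kills every `f`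
  whose product with the `i`-th generator lies in the ideal of the earlier ones.
-/

open MvPolynomial

section Substitution

variable {K : Type*} [Field K] {d : ℕ}

/-- The `K`-algebra endomorphism of `K[x, y]` fixing each `x_j` and sending `y_j` to `s j`. -/
noncomputable def ySubst (s : Fin d → MvPolynomial (Fin d ⊕ Fin d) K) :
    MvPolynomial (Fin d ⊕ Fin d) K →ₐ[K] MvPolynomial (Fin d ⊕ Fin d) K :=
  aeval (Sum.elim (fun j => X (Sum.inl j)) s)

@[simp]
lemma ySubst_X_inl (s : Fin d → MvPolynomial (Fin d ⊕ Fin d) K) (j : Fin d) :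
    ySubst s (X (Sum.inl j)) = X (Sum.inl j) := by
  simp [ySubst]

@[simp]
lemma ySubst_X_inr (s : Fin d → MvPolynomial (Fin d ⊕ Fin d) K) (j : Fin d) :
    ySubst s (X (Sum.inr j)) = s j := by
  simp [ySubst]

/-- The intersection over all `k` of the kernels of the substitutions `y_j ↦ ζ_j ^ k_j x_j` (`j ∈ T`),
which fix `x` and the `y_j` with `j ∉ T`, is contained in the ideal generated by the `y_j ^ e_j - x_j ^ e_j` (`j ∈ T`). -/
lemma mem_span_of_forall_subst_eq_zero (e : Fin d → ℕ) (he : ∀ j, 0 < e j) (ζ : Fin d → K)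
    (hζ : ∀ j, IsPrimitiveRoot (ζ j) (e j)) (T : Set (Fin d))
    (f : MvPolynomial (Fin d ⊕ Fin d) K)
    (hf : ∀ s : Fin d → MvPolynomial (Fin d ⊕ Fin d) K,
      (∀ j ∈ T, ∃ k : ℕ, s j = C (ζ j ^ k) * X (Sum.inl j)) →
      (∀ j ∉ T, s j = X (Sum.inr j)) → ySubst s f = 0) :
    f ∈ Ideal.span
      ((fun j => (X (Sum.inr j) ^ e j - X (Sum.inl j) ^ e j :
        MvPolynomial (Fin d ⊕ Fin d) K)) '' T) := by
  classical
  have hprim : ∀ j, IsPrimitiveRoot (C (ζ j) : MvPolynomial (Fin d ⊕ Fin d) K) (e j) := fun j =>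
    (hζ j).map_of_injective (C_injective _ _)
  let grid : Fin d → Finset (MvPolynomial (Fin d ⊕ Fin d) K) := fun j =>
    if j ∈ T then
      (Polynomial.nthRootsFinset (e j) (1 : MvPolynomial (Fin d ⊕ Fin d) K)).image
        (fun η => η * X (Sum.inl j))
    else {X (Sum.inr j)}
  have hgrid : ∀ j, (grid j).Nonempty := by
    intro j
    by_cases hj : j ∈ T
    · simp only [grid, hj, if_true, Finset.image_nonempty]
      exact ⟨_, (hprim j).mem_nthRootsFinset (he j)⟩
    · simp [grid, hj]
  -- `f` regarded as a polynomial in the `y_j` with coefficients in `S` not involving the `y_j`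
  let Φ : MvPolynomial (Fin d ⊕ Fin d) K →ₐ[K]
      MvPolynomial (Fin d) (MvPolynomial (Fin d ⊕ Fin d) K) :=
    aeval (Sum.elim (fun j => C (X (Sum.inl j))) (fun j => X j))
  have hΦ : ∀ (s : Fin d → MvPolynomial (Fin d ⊕ Fin d) K) p, eval s (Φ p) = ySubst s p := by
    intro s p
    have h : ((eval s).comp Φ.toRingHom) = (ySubst s).toRingHom := by
      apply MvPolynomial.ringHom_ext
      · intro r
        simp [Φ, ySubst, MvPolynomial.algebraMap_eq, MvPolynomial.algebraMap_apply]
      · rintro (j | j) <;> simp [Φ]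
    exact congrArg (fun φ => φ p) h
  obtain ⟨h, -, hh⟩ := combinatorial_nullstellensatz_exists_linearCombination grid hgrid (Φ f) (by
    intro s hs
    rw [hΦ]
    apply hf
    · intro j hj
      have := hs j
      simp only [grid, hj, if_true, Finset.mem_image] at this
      obtain ⟨η, hη, hs'⟩ := this
      have : NeZero (e j) := ⟨(he j).ne'⟩
      obtain ⟨k, -, hk⟩ := (hprim j).eq_pow_of_pow_eq_one
        ((Polynomial.mem_nthRootsFinset (he j) 1).1 hη)
      exact ⟨k, by rw [← hs', ← hk, map_pow]⟩
    · intro j hj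
      simpa [grid, hj] using hs j)
  have hid : eval (fun j => X (Sum.inr j)) (Φ f) = f := by
    rw [hΦ]
    have : (Sum.elim (fun j => X (Sum.inl j)) (fun j => X (Sum.inr j)) :
        Fin d ⊕ Fin d → MvPolynomial (Fin d ⊕ Fin d) K) = X := by
      ext1 (j | j) <;> rfl
    rw [ySubst, this, aeval_X_left_apply]
  rw [← hid, hh, Finsupp.linearCombination_apply, Finsupp.sum, map_sum]
  refine Ideal.sum_mem _ fun j _ => ?_
  rw [smul_eq_mul, map_mul, map_prod]
  refine Ideal.mul_mem_left _ _ ?_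
  by_cases hj : j ∈ T
  · refine Ideal.subset_span ⟨j, hj, ?_⟩
    simp only [grid, hj, if_true, map_sub, eval_X, eval_C]
    rw [Finset.prod_image fun _ _ _ _ hxy => mul_right_cancel₀ (X_ne_zero _) hxy]
    exact (hprim j).pow_sub_pow_eq_prod_sub_mul _ _ (he j)
  · -- the factor `y_j - y_j` vanishes
    simp [grid, hj]

lemma ySubst_gen_eq_zero {e : ℕ} {ζ : K} (hζ : ζ ^ e = 1)
    {s : Fin d → MvPolynomial (Fin d ⊕ Fin d) K} {j : Fin d}
    (hs : ∃ k : ℕ, s j = C (ζ ^ k) * X (Sum.inl j)) :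
    ySubst s (X (Sum.inr j) ^ e - X (Sum.inl j) ^ e) = 0 := by
  obtain ⟨k, hk⟩ := hs
  rw [map_sub, map_pow, map_pow, ySubst_X_inr, ySubst_X_inl, hk, mul_pow, ← map_pow, ← pow_mul,
    mul_comm k, pow_mul, hζ]
  simp

lemma gen_ne_zero {e : ℕ} (he : 0 < e) (j : Fin d) :
    (X (Sum.inr j) ^ e - X (Sum.inl j) ^ e : MvPolynomial (Fin d ⊕ Fin d) K) ≠ 0 := by
  intro h
  have := congrArg (eval (Sum.elim (fun _ => (0 : K)) (fun _ => 1))) h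
  simp [he.ne'] at this

theorem isRegular_ofFn_gens (e : Fin d → ℕ) (he : ∀ j, 0 < e j) (ζ : Fin d → K)
    (hζ : ∀ j, IsPrimitiveRoot (ζ j) (e j)) :
    RingTheory.Sequence.IsRegular (MvPolynomial (Fin d ⊕ Fin d) K)
      (List.ofFn fun j : Fin d => (X (Sum.inr j) ^ e j - X (Sum.inl j) ^ e j :
        MvPolynomial (Fin d ⊕ Fin d) K)) := by
  set gens : Fin d → MvPolynomial (Fin d ⊕ Fin d) K :=
    fun j => X (Sum.inr j) ^ e j - X (Sum.inl j) ^ e j with hgens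
  refine ⟨⟨fun i hi => ?_⟩, ?_⟩
  · have hid : i < d := by simpa using hi
    have hspan : Ideal.ofList ((List.ofFn gens).take i) =
        Ideal.span (gens '' {j | (j : ℕ) < i}) := by
      rw [Ideal.ofList]
      congr 1
      ext p
      simp only [Set.mem_ofPred_eq, List.mem_take_iff_getElem, Set.mem_image, List.length_ofFn,
        List.getElem_ofFn]
      constructor
      · rintro ⟨j, hj, rfl⟩
        exact ⟨⟨j, by omega⟩, by simp; omega, rfl⟩
      · rintro ⟨j, hj, rfl⟩
        exact ⟨j, by omega, rfl⟩
    rw [isSMulRegular_quotient_iff_mem_of_smul_mem]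
    intro f hf
    rw [smul_eq_mul, Ideal.mul_top, hspan, List.getElem_ofFn, smul_eq_mul] at hf
    rw [smul_eq_mul, Ideal.mul_top, hspan]
    refine mem_span_of_forall_subst_eq_zero e he ζ hζ _ f fun s hsT hsT' => ?_
    have hker : Ideal.span (gens '' {j | (j : ℕ) < i}) ≤ RingHom.ker (ySubst s) := by
      rw [Ideal.span_le]
      rintro _ ⟨j, hj, rfl⟩
      exact ySubst_gen_eq_zero (hζ j).pow_eq_one (hsT j hj)
    have h0 : ySubst s (gens ⟨i, hid⟩ * f) = 0 := hker hf
    have hfix : ySubst s (gens ⟨i, hid⟩) = gens ⟨i, hid⟩ := by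
      simp [hgens, hsT' ⟨i, hid⟩ (by simp)]
    rw [map_mul, hfix] at h0
    exact (mul_eq_zero.1 h0).resolve_left (gen_ne_zero (he _) _)
  · -- all generators vanish at the origin
    intro htop
    rw [smul_eq_mul, Ideal.mul_top] at htop
    have hle : Ideal.ofList (List.ofFn gens) ≤
        RingHom.ker (constantCoeff : MvPolynomial (Fin d ⊕ Fin d) K →+* K) := by
      rw [Ideal.span_le]
      intro p hp
      obtain ⟨j, rfl⟩ := (List.mem_ofFn' _ _).1 hp
      simp [hgens, RingHom.mem_ker, (he j).ne']
    have h1 : (1 : MvPolynomial (Fin d ⊕ Fin d) K) ∈ Ideal.ofList (List.ofFn gens) := by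
      rw [← htop]; trivial
    have := hle h1
    simp [RingHom.mem_ker] at this

end Substitution

section Action

variable {K : Type*} [Field K] {d a : ℕ} {G : Type*} [Group G]
  [MulSemiringAction G (MvPolynomial (Fin d) K)]

lemma smul_X_mul {g h : G} {c c' : Fin d → K}
    (hC : ∀ (g : G) (c : K), g • (C c : MvPolynomial (Fin d) K) = C c)
    (hg : ∀ j, g • (X j : MvPolynomial (Fin d) K) = C (c j) * X j)
    (hh : ∀ j, h • (X j : MvPolynomial (Fin d) K) = C (c' j) * X j) (j : Fin d) :
    (g * h) • (X j : MvPolynomial (Fin d) K) = C (c j * c' j) * X j := by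
  rw [mul_smul, hh, smul_mul', hC, hg, map_mul]
  ring

/-- If for every `j` some element of `G` multiplies `x_j` by `ζ_j` and fixes the other variables,
then every rescaling `x_j ↦ ζ_j ^ k_j x_j` is realised by an element of `G`. -/
lemma exists_smul_X_eq (hC : ∀ (g : G) (c : K), g • (C c : MvPolynomial (Fin d) K) = C c)
    (ζ : Fin d → K)
    (hgen : ∀ i : Fin d, ∃ g : G, ∀ j, g • (X j : MvPolynomial (Fin d) K) =
      C ((Pi.mulSingle i (ζ i) : Fin d → K) j) * X j) (k : Fin d → ℕ) :
    ∃ g : G, ∀ j, g • (X j : MvPolynomial (Fin d) K) = C (ζ j ^ k j) * X j := by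
  let M : Submonoid (Fin d → K) :=
    { carrier := {c | ∃ g : G, ∀ j, g • (X j : MvPolynomial (Fin d) K) = C (c j) * X j}
      one_mem' := ⟨1, by simp⟩
      mul_mem' := by
        rintro c c' ⟨g, hg⟩ ⟨h, hh⟩
        exact ⟨g * h, smul_X_mul hC hg hh⟩ }
  have hM : (∏ i, Pi.mulSingle i (ζ i) ^ k i) ∈ M :=
    M.prod_mem fun i _ => M.pow_mem (hgen i) _
  have hprod : (∏ i, (Pi.mulSingle i (ζ i) : Fin d → K) ^ k i) = fun j => ζ j ^ k j := by
    simp_rw [← Pi.mulSingle_pow]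
    exact Finset.univ_prod_mulSingle (fun j => ζ j ^ k j)
  rw [hprod] at hM
  exact hM

/-- If generators of `G` multiply each `x_j` by `e_j`-th roots of unity, so do all elements. -/
lemma exists_root_smul_X_eq (hC : ∀ (g : G) (c : K), g • (C c : MvPolynomial (Fin d) K) = C c)
    (e : Fin d → ℕ) (A : Set G) (hA : Subgroup.closure A = ⊤)
    (hroot : ∀ g ∈ A, ∃ c : Fin d → K, (∀ j, c j ^ e j = 1) ∧
      ∀ j, g • (X j : MvPolynomial (Fin d) K) = C (c j) * X j)
    (he : ∀ j, 0 < e j) (g : G) :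
    ∃ c : Fin d → K, (∀ j, c j ^ e j = 1) ∧
      ∀ j, g • (X j : MvPolynomial (Fin d) K) = C (c j) * X j := by
  have hg : g ∈ Subgroup.closure A := hA ▸ Subgroup.mem_top g
  induction hg using Subgroup.closure_induction with
  | mem g hg => exact hroot g hg
  | one => exact ⟨1, by simp, by simp⟩
  | mul g h _ _ ihg ihh =>
    obtain ⟨c, hc, hg⟩ := ihg
    obtain ⟨c', hc', hh⟩ := ihh
    exact ⟨fun j => c j * c' j, fun j => by rw [mul_pow, hc, hc', one_mul], smul_X_mul hC hg hh⟩
  | inv g _ ih =>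
    obtain ⟨c, hc, hg⟩ := ih
    refine ⟨fun j => (c j)⁻¹, fun j => by rw [inv_pow, hc, inv_one], fun j => ?_⟩
    have hc0 : c j ≠ 0 := fun h0 => by
      have := hc j
      simp [h0, (he j).ne'] at this
    rw [inv_smul_eq_iff, smul_mul', hC, hg, ← mul_assoc, ← map_mul, inv_mul_cancel₀ hc0, map_one,
      one_mul]

end Action

/-- For the diagonal action of `G = ⟨g₁, …, g_a⟩` on `K[x₁, …, x_d]` over an algebraically
closed field, the Derksen ideal equals
`(y₁^{d₁} - x₁^{d₁}, …, y_a^{d_a} - x_a^{d_a}, y_{a+1} - x_{a+1}, …, y_d - x_d)`;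
in particular it is generated by a regular sequence. -/
theorem derksenIdeal_diagonal_eq_span {K : Type*} [Field K] [IsAlgClosed K]
    (d a : ℕ) (ha : a ≤ d) (G : Type*) [Group G] [Finite G]
    [MulSemiringAction G (MvPolynomial (Fin d) K)]
    (gen : Fin a → G) (hgen : Subgroup.closure (Set.range gen) = ⊤)
    (di : Fin a → ℕ) (hdi : ∀ i, 1 ≤ di i)
    (ω : Fin a → K) (hω : ∀ i, IsPrimitiveRoot (ω i) (di i))
    (hC : ∀ (g : G) (c : K), g • (C c : MvPolynomial (Fin d) K) = C c)
    (hact : ∀ (i : Fin a) (j : Fin d),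
      gen i • (X j : MvPolynomial (Fin d) K) =
        if j = Fin.castLE ha i then C (ω i) * X j else X j)
    (gens : Fin d → MvPolynomial (Fin d ⊕ Fin d) K)
    (hgens : ∀ i : Fin d, gens i =
      if h : (i : ℕ) < a then
        X (Sum.inr i) ^ di ⟨i, h⟩ - X (Sum.inl i) ^ di ⟨i, h⟩
      else
        X (Sum.inr i) - X (Sum.inl i)) :
    derksenIdeal K d G = Ideal.span (Set.range gens) ∧
      RingTheory.Sequence.IsRegular (MvPolynomial (Fin d ⊕ Fin d) K) (List.ofFn gens) := by
  classical
  let e : Fin d → ℕ := fun j => if h : (j : ℕ) < a then di ⟨j, h⟩ else 1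
  let ζ : Fin d → K := fun j => if h : (j : ℕ) < a then ω ⟨j, h⟩ else 1
  have he : ∀ j, 0 < e j := by
    intro j
    by_cases h : (j : ℕ) < a
    · simpa [e, h] using Nat.lt_of_succ_le (hdi ⟨j, h⟩)
    · simp [e, h]
  have hζ : ∀ j, IsPrimitiveRoot (ζ j) (e j) := by
    intro j
    by_cases h : (j : ℕ) < a
    · simpa [e, ζ, h] using hω ⟨j, h⟩
    · simp [e, ζ, h]
  obtain rfl : gens = fun j => X (Sum.inr j) ^ e j - X (Sum.inl j) ^ e j := by
    funext j
    rw [hgens]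
    by_cases h : (j : ℕ) < a <;> simp [e, h]
  have hgenX : ∀ (i : Fin a) (j : Fin d), gen i • (X j : MvPolynomial (Fin d) K) =
      C ((Pi.mulSingle (Fin.castLE ha i) (ζ (Fin.castLE ha i)) : Fin d → K) j) * X j := by
    intro i j
    rw [hact]
    by_cases h : j = Fin.castLE ha i
    · subst h
      simp [ζ]
    · simp [h]
  refine ⟨le_antisymm ?_ ?_, isRegular_ofFn_gens e he ζ hζ⟩
  · intro f hf
    rw [← Set.image_univ]
    refine mem_span_of_forall_subst_eq_zero e he ζ hζ Set.univ f fun s hs _ => ?_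
    choose k hk using fun j => hs j (Set.mem_univ j)
    obtain ⟨g, hg⟩ := exists_smul_X_eq hC ζ (fun i => by
      by_cases h : (i : ℕ) < a
      · exact ⟨gen ⟨i, h⟩, hgenX ⟨i, h⟩⟩
      · exact ⟨1, fun j => by simp [ζ, h]⟩) k
    have hker : derksenComponent K d g ≤ RingHom.ker (ySubst s) := by
      rw [derksenComponent, Ideal.span_le]
      rintro _ ⟨j, rfl⟩
      beta_reduce
      rw [SetLike.mem_coe, RingHom.mem_ker, hg, map_sub, ySubst_X_inr, hk]
      simp [← algebraMap_eq]
    exact hker ((Ideal.mem_iInf.1 hf) g)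
  · refine le_iInf fun g => ?_
    obtain ⟨c, hc, hg⟩ := exists_root_smul_X_eq hC e _ hgen (by
      rintro _ ⟨i, rfl⟩
      refine ⟨_, fun j => ?_, hgenX i⟩
      by_cases h : j = Fin.castLE ha i
      · subst h
        rw [Pi.mulSingle_eq_same, (hζ _).pow_eq_one]
      · rw [Pi.mulSingle_eq_of_ne h, one_pow]) he g
    rw [Ideal.span_le]
    rintro _ ⟨j, rfl⟩
    -- `y_j ^ e_j - x_j ^ e_j = y_j ^ e_j - (c_j x_j) ^ e_j` is divisible by `y_j - c_j x_j`
    have hdvd := sub_dvd_pow_sub_pow (X (Sum.inr j) : MvPolynomial (Fin d ⊕ Fin d) K)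
      (C (c j) * X (Sum.inl j)) (e j)
    rw [mul_pow, ← map_pow, hc, map_one, one_mul] at hdvd
    refine Ideal.mem_of_dvd _ hdvd (Ideal.subset_span ⟨j, ?_⟩)
    simp [hg]
end

section
/- Let K be an algebraically closed field, R = K[x_1, ..., x_d] a polynomial ring, and G a finite group acting linearly on R, hence on V = K^d, such that every element g ≠ e of G fixes only the origin. For g ∈ G write J_g = (y_1 − g(x_1), ..., y_d − g(x_d)) ⊆ S = K[x_1, ..., x_d, y_1, ..., y_d]. Then for all distinct g, h ∈ G, J_g + J_h = (x_1, ..., x_d, y_1, ..., y_d), the homogeneous maximal ideal of S. -/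
/-!
Write `g • xᵢ = ∑ⱼ A_g i j xⱼ`. If `A_g v = A_h v`, then the ring homomorphisms
`p ↦ (g • p)(v)` and `p ↦ (h • p)(v)` agree on constants and variables, hence everywhere; on
`h⁻¹ • xᵢ` this says that `g h⁻¹ ≠ 1` fixes `v`, so `v = 0`. Thus `A_g - A_h` is invertible, and
every `xⱼ` is a linear combination of the forms `g • xᵢ - h • xᵢ`, which lie in `J_g + J_h` as
differences of generators. Then `yᵢ = (yᵢ - g • xᵢ) + g • xᵢ` lies in `J_g + J_h` too. The other
inclusion holds because each `g • xᵢ` has no constant term.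
-/

open MvPolynomial

/-- A linear form is the combination of the variables given by its degree-one coefficients. -/
lemma isHomogeneous_one_eq_sum {K σ : Type*} [Field K] [Fintype σ]
    {p : MvPolynomial σ K} (hp : p.IsHomogeneous 1) :
    p = ∑ j, C (coeff (Finsupp.single j 1) p) * X j := by
  classical
  ext m
  simp only [coeff_sum, coeff_C_mul, coeff_X]
  by_cases hm : ∃ j, Finsupp.single j 1 = m
  · obtain ⟨j, rfl⟩ := hm
    simp [Finsupp.single_left_inj]
  · push Not at hm
    simp only [hm, if_false, mul_zero, Finset.sum_const_zero]
    apply hp.coeff_eq_zero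
    intro h1
    obtain ⟨j, hj⟩ := (Finsupp.range_single_one (σ := σ)).ge h1
    exact hm j hj

/-- If every non-identity element of `G` fixes only the origin, then for distinct
`g, h ∈ G` the sum `J_g + J_h` is the homogeneous maximal ideal of
`S = K[x₁, …, x_d, y₁, …, y_d]`. -/
theorem derksenComponent_sup_eq_max {K : Type*} [Field K] [IsAlgClosed K]
    (d : ℕ) (G : Type*) [Group G] [Finite G]
    [MulSemiringAction G (MvPolynomial (Fin d) K)]
    (hC : ∀ (g : G) (c : K), g • (C c : MvPolynomial (Fin d) K) = C c)
    (hlin : ∀ (g : G) (i : Fin d), (g • (X i : MvPolynomial (Fin d) K)).IsHomogeneous 1)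
    (hfix : ∀ g : G, g ≠ 1 → ∀ v : Fin d → K,
      (∀ i, eval v (g • (X i : MvPolynomial (Fin d) K)) = v i) → v = 0)
    (g h : G) (hgh : g ≠ h) :
    derksenComponent K d g ⊔ derksenComponent K d h =
      Ideal.span (Set.range (X : Fin d ⊕ Fin d → MvPolynomial (Fin d ⊕ Fin d) K)) := by
  classical
  set A : G → Matrix (Fin d) (Fin d) K := fun k =>
    Matrix.of fun i j => coeff (Finsupp.single j 1) (k • (X i : MvPolynomial (Fin d) K)) with hA
  have hsum : ∀ (k : G) (i : Fin d),
      k • (X i : MvPolynomial (Fin d) K) = ∑ j, C (A k i j) * X j :=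
    fun k i => isHomogeneous_one_eq_sum (hlin k i)
  have heval : ∀ (k : G) (v : Fin d → K) (i : Fin d),
      eval v (k • (X i : MvPolynomial (Fin d) K)) = (A k).mulVec v i := by
    intro k v i
    simp [hsum, Matrix.mulVec, dotProduct]
  have hinj : ∀ v, (A g - A h).mulVec v = 0 → v = 0 := by
    intro v hv
    rw [Matrix.sub_mulVec, sub_eq_zero] at hv
    have hhom : (eval v).comp (MulSemiringAction.toRingHom G (MvPolynomial (Fin d) K) g) =
        (eval v).comp (MulSemiringAction.toRingHom G (MvPolynomial (Fin d) K) h) := by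
      apply MvPolynomial.ringHom_ext
      · intro c
        simp [hC]
      · intro i
        simp [heval, hv]
    apply hfix (g * h⁻¹) (fun e => hgh (mul_inv_eq_one.1 e)) v
    intro i
    have := RingHom.congr_fun hhom (h⁻¹ • X i)
    simpa [mul_smul] using this
  have hunit : IsUnit (A g - A h) := by
    rw [← Matrix.mulVec_injective_iff_isUnit]
    exact (injective_iff_map_eq_zero (Matrix.mulVecLin (A g - A h))).2 hinj
  obtain ⟨B, hB⟩ := hunit.exists_left_inv
  have hg : ∀ i, X (Sum.inr i) - rename Sum.inl (g • (X i : MvPolynomial (Fin d) K)) ∈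
      derksenComponent K d g ⊔ derksenComponent K d h :=
    fun i => Ideal.mem_sup_left (Ideal.subset_span ⟨i, rfl⟩)
  have hh : ∀ i, X (Sum.inr i) - rename Sum.inl (h • (X i : MvPolynomial (Fin d) K)) ∈
      derksenComponent K d g ⊔ derksenComponent K d h :=
    fun i => Ideal.mem_sup_right (Ideal.subset_span ⟨i, rfl⟩)
  have hX : ∀ j, (X j : MvPolynomial (Fin d) K) =
      ∑ i, C (B j i) * (g • X i - h • X i) := by
    intro j
    have hsub : ∀ i, g • (X i : MvPolynomial (Fin d) K) - h • X i =
        ∑ l, C ((A g - A h) i l) * X l := by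
      intro i
      simp [hsum, ← Finset.sum_sub_distrib, sub_mul]
    calc (X j : MvPolynomial (Fin d) K) = ∑ l, C ((B * (A g - A h)) j l) * X l := by
          simp [hB, Matrix.one_apply]
      _ = _ := by
          simp only [hsub, Matrix.mul_apply, map_sum, map_mul, Finset.sum_mul, Finset.mul_sum,
            mul_assoc]
          exact Finset.sum_comm
  have hx : ∀ j, (X (Sum.inl j) : MvPolynomial (Fin d ⊕ Fin d) K) ∈
      derksenComponent K d g ⊔ derksenComponent K d h := by
    intro j
    rw [← rename_X (R := K) Sum.inl j, hX j, map_sum]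
    refine Ideal.sum_mem _ fun i _ => ?_
    rw [map_mul, map_sub]
    refine Ideal.mul_mem_left _ _ ?_
    simpa using Ideal.sub_mem _ (hh i) (hg i)
  -- Any ideal containing the `x`-variables contains every linear form in them.
  have hlinmem : ∀ (I : Ideal (MvPolynomial (Fin d ⊕ Fin d) K)), (∀ j, X (Sum.inl j) ∈ I) →
      ∀ (k : G) (i : Fin d), rename Sum.inl (k • (X i : MvPolynomial (Fin d) K)) ∈ I := by
    intro I hI k i
    rw [hsum, map_sum]
    refine Ideal.sum_mem _ fun j _ => ?_
    rw [map_mul, rename_X]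
    exact Ideal.mul_mem_left _ _ (hI j)
  have hle : ∀ k : G, derksenComponent K d k ≤
      Ideal.span (Set.range (X : Fin d ⊕ Fin d → MvPolynomial (Fin d ⊕ Fin d) K)) := by
    intro k
    refine Ideal.span_le.2 ?_
    rintro _ ⟨i, rfl⟩
    exact Ideal.sub_mem _ (Ideal.subset_span (Set.mem_range_self _))
      (hlinmem _ (fun j => Ideal.subset_span (Set.mem_range_self _)) k i)
  refine le_antisymm (sup_le (hle g) (hle h)) (Ideal.span_le.2 ?_)
  rintro _ ⟨i | i, rfl⟩
  · exact hx i
  · simpa using Ideal.add_mem _ (hg i) (hlinmem _ hx g i)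
end

section
/- Let K be an algebraically closed field, R = K[x_1, ..., x_d] a polynomial ring, and G a finite group acting linearly on R, hence on V = K^d, such that every element g ≠ e of G fixes only the origin. Let S = K[x_1, ..., x_d, y_1, ..., y_d], let I_G be the Derksen ideal, and let n = (x_1, ..., x_d, y_1, ..., y_d). Then for every n-th symbolic power and every prime ideal p of S with p ≠ n, one has I_G^{(n)} S_p = I_G^n S_p for all n ≥ 1. -/
/-! The idea: write `P_g = (y₁ - g(x₁), …, y_d - g(x_d))`, so that `I_G = ⋂ P_g`.

* A linear change of coordinates carries `P_g` to the ideal generated by the variables `y_i` in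
  `K[x][y]`. Hence `P_g` is prime and each of its powers is `P_g`-primary, because the `y`-adic
  order of polynomials over a domain is additive (`isPrime_idealOfVars`,
  `mem_pow_idealOfVars_of_mul_mem`, `exists_equiv_derksenComponent`).
* If a prime `q` contains `P_g` and `P_h` with `g ≠ h`, then it contains all `g(x_i) - h(x_i)`.
  Their only common zero is the origin, since `h⁻¹g` fixes only the origin, so by the
  Nullstellensatz `q` contains all `x_i` and hence all `y_i`
  (`idealOfVars_le_of_derksenComponent_le`). Therefore a prime `p` other than the irrelevant ideal
  contains at most one `P_g`.
* For any finite family of primes with primary powers, at most one of which lies in `p`, symbolic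
  and ordinary powers of the intersection agree after localization at `p`
  (`map_symbolicPower_iInf`). If `P_i ≤ p`, choose `s ∉ p` lying in every member of the family
  that is not contained in `p`. Then `s P_i ≤ I`, so `P_i` is associated to `I`, the symbolic power
  is contained in `P_iⁿ`, and `sⁿ` multiplies it into `Iⁿ`. If no `P_i` lies in `p`, the same
  choice of `s` lies in `I`. -/

open MvPolynomial

/-- The comparison of symbolic and ordinary powers for an intersection of finitely many primes
whose powers are primary, localized at a prime containing at most one of them. -/
theorem map_symbolicPower_iInf {A ι : Type*} [CommRing A] [Finite ι] (P : ι → Ideal A)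
    (hprime : ∀ i, (P i).IsPrime)
    (hprimary : ∀ (i : ι) (n : ℕ) (a s : A), a * s ∈ P i ^ n → s ∉ P i → a ∈ P i ^ n)
    (p : Ideal A) [hp : p.IsPrime] (hsep : ∀ i j, P i ≤ p → P j ≤ p → i = j) (n : ℕ) :
    Ideal.map (algebraMap A (Localization.AtPrime p)) (symbolicPower (⨅ i, P i) n) =
      Ideal.map (algebraMap A (Localization.AtPrime p)) ((⨅ i, P i) ^ n) := by
  classical
  have := Fintype.ofFinite ι
  apply le_antisymm
  -- The witness `s` lies outside `p` but in every member of the family not contained in `p`.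
  · obtain ⟨s, hsJ, hsp⟩ : ∃ s ∈ (Finset.univ.filter fun j => ¬ P j ≤ p).inf P, s ∉ p := by
      by_contra! hcon
      obtain ⟨j, hj, hjp⟩ := hp.inf_le'.1 (show _ ≤ p from hcon)
      exact (Finset.mem_filter.1 hj).2 hjp
    have hs : ∀ j, ¬ P j ≤ p → s ∈ P j := by
      intro j hj
      rw [Submodule.mem_finsetInf] at hsJ
      exact hsJ j (by simp [hj])
    have hsn : s ^ n ∉ p := fun h => hsp (hp.mem_of_pow_mem n h)
    rw [Ideal.map_le_iff_le_comap]
    intro f hf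
    rw [Ideal.mem_comap, IsLocalization.algebraMap_mem_map_algebraMap_iff p.primeCompl]
    refine ⟨s ^ n, hsn, ?_⟩
    by_cases h : ∃ i, P i ≤ p
    · obtain ⟨i, hi⟩ := h
      have hsi : s ∉ P i := fun h => hsp (hi h)
      have hmul : ∀ a, a * s ∈ ⨅ j, P j ↔ a ∈ P i := by
        intro a
        rw [Ideal.mem_iInf]
        constructor
        · intro h
          exact ((hprime i).mem_or_mem (h i)).resolve_right hsi
        · intro ha j
          by_cases hj : P j ≤ p
          · rw [hsep j i hj hi]
            exact Ideal.mul_mem_right _ _ ha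
          · exact Ideal.mul_mem_left _ _ (hs j hj)
      have hass : P i ∈ associatedPrimes A (A ⧸ ⨅ j, P j) := by
        refine ⟨hprime i, Ideal.Quotient.mk _ s, ?_⟩
        have hcolon : Submodule.colon (⊥ : Submodule A (A ⧸ ⨅ j, P j))
            {Ideal.Quotient.mk _ s} = P i := by
          ext a
          rw [Submodule.mem_colon_singleton, Submodule.mem_bot, ← hmul a,
            ← Ideal.Quotient.eq_zero_iff_mem, map_mul]
          rfl
        rw [hcolon, (hprime i).radical]
      have hfi : f ∈ P i ^ n := by
        have := hprime i
        have h1 := (Submodule.mem_iInf _).1 ((Submodule.mem_iInf _).1 hf (P i)) hass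
        rw [Ideal.mem_comap,
          IsLocalization.algebraMap_mem_map_algebraMap_iff (P i).primeCompl] at h1
        obtain ⟨t, ht, htf⟩ := h1
        rw [mul_comm] at htf
        exact hprimary i n f t (Ideal.pow_right_mono (iInf_le P i) n htf) ht
      have hle : Ideal.span {s} * P i ≤ ⨅ j, P j := by
        rw [Ideal.span_singleton_mul_le_iff]
        intro a ha
        rw [mul_comm]
        exact (hmul a).2 ha
      have := Ideal.pow_right_mono hle n
      rw [mul_pow] at this
      exact this (Ideal.mul_mem_mul (Ideal.pow_mem_pow (Ideal.mem_span_singleton_self s) n) hfi)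
    · push Not at h
      exact Ideal.mul_mem_right _ _
        (Ideal.pow_mem_pow (Ideal.mem_iInf.2 fun j => hs j (h j)) n)
  · exact Ideal.map_mono (le_iInf₂ fun q hq => Ideal.le_comap_map)

section idealOfVars

variable {σ A : Type*} [CommRing A]

theorem mem_pow_idealOfVars_iff_le_order (n : ℕ) (f : MvPolynomial σ A) :
    f ∈ idealOfVars σ A ^ n ↔ n ≤ (f : MvPowerSeries σ A).order := by
  rw [mem_pow_idealOfVars_iff']
  constructor
  · intro h
    exact MvPowerSeries.nat_le_order fun x hx => by simpa using h x hx
  · intro h x hx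
    rw [← coeff_coe]
    exact MvPowerSeries.coeff_of_lt_order (lt_of_lt_of_le (by exact_mod_cast hx) h)

/-- Powers of the ideal of variables over a domain are primary: an element outside the ideal has
order zero, and the order is additive. -/
theorem mem_pow_idealOfVars_of_mul_mem [IsDomain A] (n : ℕ) (a s : MvPolynomial σ A)
    (h : a * s ∈ idealOfVars σ A ^ n) (hs : s ∉ idealOfVars σ A) : a ∈ idealOfVars σ A ^ n := by
  rw [← pow_one (idealOfVars σ A), mem_pow_idealOfVars_iff_le_order, Nat.cast_one,
    Order.one_le_iff_ne_zero, not_not] at hs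
  rwa [mem_pow_idealOfVars_iff_le_order, coe_mul, MvPowerSeries.order_mul, hs, add_zero,
    ← mem_pow_idealOfVars_iff_le_order] at h

theorem isPrime_idealOfVars [IsDomain A] : (idealOfVars σ A).IsPrime := by
  refine ⟨?_, fun {a s} h => ?_⟩
  · rw [Ideal.ne_top_iff_one, ← pow_one (idealOfVars σ A), mem_pow_idealOfVars_iff']
    intro h
    simpa using h 0 (by simp)
  · by_contra! hcon
    apply hcon.1
    have := mem_pow_idealOfVars_of_mul_mem 1 a s (by rwa [pow_one]) hcon.2
    rwa [pow_one] at this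

/-- Over a field the ideal of variables is maximal. -/
theorem eq_idealOfVars_of_le {K : Type*} [Field K] (p : Ideal (MvPolynomial σ K)) [hp : p.IsPrime]
    (h : idealOfVars σ K ≤ p) : p = idealOfVars σ K := by
  refine le_antisymm (fun f hf => ?_) h
  have hsub : f - C (coeff 0 f) ∈ idealOfVars σ K := by
    rw [← pow_one (idealOfVars σ K), mem_pow_idealOfVars_iff']
    intro x hx
    obtain rfl : x = 0 := by simpa [Finsupp.degree_eq_zero_iff] using hx
    simp
  have hC : C (coeff 0 f) ∈ p := by simpa using sub_mem hf (h hsub)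
  by_cases h0 : coeff 0 f = 0
  · simpa [h0] using hsub
  · exact absurd (Ideal.eq_top_of_isUnit_mem _ hC ((isUnit_iff_ne_zero.2 h0).map C)) hp.ne_top

end idealOfVars

section Derksen

variable {K : Type*} [Field K] {d : ℕ} {G : Type*} [Group G]
    [MulSemiringAction G (MvPolynomial (Fin d) K)]

/-- The coordinate change `x_i ↦ x_i`, `y_i ↦ y_i + g(x_i)`, followed by the identification of `S`
with `K[x][y]`, carries `P_g` to the ideal generated by the variables `y_i`. -/
theorem exists_equiv_derksenComponent (g : G) :
    ∃ e : MvPolynomial (Fin d ⊕ Fin d) K ≃+* MvPolynomial (Fin d) (MvPolynomial (Fin d) K),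
      (derksenComponent K d g).map e = idealOfVars (Fin d) (MvPolynomial (Fin d) K) := by
  let t : Fin d → MvPolynomial (Fin d ⊕ Fin d) K := fun i =>
    rename Sum.inl (g • (X i : MvPolynomial (Fin d) K))
  let φ : MvPolynomial (Fin d ⊕ Fin d) K →ₐ[K] MvPolynomial (Fin d ⊕ Fin d) K :=
    aeval (Sum.elim (fun i => X (Sum.inl i)) (fun i => X (Sum.inr i) + t i))
  let ψ : MvPolynomial (Fin d ⊕ Fin d) K →ₐ[K] MvPolynomial (Fin d ⊕ Fin d) K :=
    aeval (Sum.elim (fun i => X (Sum.inl i)) (fun i => X (Sum.inr i) - t i))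
  have hφX : ∀ i, φ (X (Sum.inr i)) = X (Sum.inr i) + t i := fun i => by simp [φ]
  have hψX : ∀ i, ψ (X (Sum.inr i)) = X (Sum.inr i) - t i := fun i => by simp [ψ]
  have hφX' : ∀ i, φ (X (Sum.inl i)) = X (Sum.inl i) := fun i => by simp [φ]
  have hψX' : ∀ i, ψ (X (Sum.inl i)) = X (Sum.inl i) := fun i => by simp [ψ]
  have hren : ∀ F : MvPolynomial (Fin d ⊕ Fin d) K →ₐ[K] MvPolynomial (Fin d ⊕ Fin d) K,
      (∀ i, F (X (Sum.inl i)) = X (Sum.inl i)) → ∀ i, F (t i) = t i := by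
    intro F hF i
    have hcomp : F.comp (rename Sum.inl) = rename Sum.inl := algHom_ext fun j => by simp [hF]
    exact DFunLike.congr_fun hcomp _
  have hφ : ∀ i, φ (t i) = t i := hren φ hφX'
  have hψ : ∀ i, ψ (t i) = t i := hren ψ hψX'
  let θ : MvPolynomial (Fin d ⊕ Fin d) K ≃ₐ[K] MvPolynomial (Fin d ⊕ Fin d) K :=
    AlgEquiv.ofAlgHom φ ψ
      (algHom_ext fun i => by rcases i with i | i <;> simp [hφ, hφX, hψX, hφX', hψX'])
      (algHom_ext fun i => by rcases i with i | i <;> simp [hψ, hφX, hψX, hφX', hψX'])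
  let e := (θ.trans (renameEquiv K (Equiv.sumComm (Fin d) (Fin d)))).trans
    (sumAlgEquiv K (Fin d) (Fin d))
  refine ⟨e.toRingEquiv, ?_⟩
  rw [derksenComponent, Ideal.map_span, ← Set.range_comp]
  congr 2
  funext i
  change sumAlgEquiv K (Fin d) (Fin d) (renameEquiv K (Equiv.sumComm (Fin d) (Fin d))
    (φ (X (Sum.inr i) - t i))) = X i
  rw [map_sub, hφX, hφ, add_sub_cancel_right]
  simp

theorem isPrime_derksenComponent (g : G) : (derksenComponent K d g).IsPrime := by
  obtain ⟨e, he⟩ := exists_equiv_derksenComponent (K := K) (d := d) g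
  have := isPrime_idealOfVars (σ := Fin d) (A := MvPolynomial (Fin d) K)
  rw [← Ideal.comap_map_of_bijective e e.bijective (I := derksenComponent K d g), he]
  exact Ideal.comap_isPrime _ _

theorem mem_pow_derksenComponent_of_mul_mem (g : G) (n : ℕ) (a s : MvPolynomial (Fin d ⊕ Fin d) K)
    (h : a * s ∈ derksenComponent K d g ^ n) (hs : s ∉ derksenComponent K d g) :
    a ∈ derksenComponent K d g ^ n := by
  obtain ⟨e, he⟩ := exists_equiv_derksenComponent (K := K) (d := d) g
  have key : ∀ (J : Ideal (MvPolynomial (Fin d ⊕ Fin d) K)) b, b ∈ J ↔ e b ∈ J.map e := by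
    intro J b
    rw [← Ideal.mem_comap, Ideal.comap_map_of_bijective e e.bijective]
  rw [key, Ideal.map_pow, he] at h ⊢
  rw [key, he] at hs
  rw [map_mul] at h
  exact mem_pow_idealOfVars_of_mul_mem n _ _ h hs

/-- Two distinct components of the Derksen ideal meet only at the origin. -/
theorem idealOfVars_le_of_derksenComponent_le [IsAlgClosed K]
    (hC : ∀ (g : G) (c : K), g • (C c : MvPolynomial (Fin d) K) = C c)
    (hlin : ∀ (g : G) (i : Fin d), (g • (X i : MvPolynomial (Fin d) K)).IsHomogeneous 1)
    (hfix : ∀ g : G, g ≠ 1 → ∀ v : Fin d → K,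
      (∀ i, eval v (g • (X i : MvPolynomial (Fin d) K)) = v i) → v = 0)
    {g h : G} (hgh : g ≠ h) (q : Ideal (MvPolynomial (Fin d ⊕ Fin d) K)) [q.IsPrime]
    (hg : derksenComponent K d g ≤ q) (hh : derksenComponent K d h ≤ q) :
    idealOfVars (Fin d ⊕ Fin d) K ≤ q := by
  have hg' : ∀ i, X (Sum.inr i) - rename Sum.inl (g • (X i : MvPolynomial (Fin d) K)) ∈ q :=
    fun i => hg (Ideal.subset_span ⟨i, rfl⟩)
  have hh' : ∀ i, X (Sum.inr i) - rename Sum.inl (h • (X i : MvPolynomial (Fin d) K)) ∈ q :=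
    fun i => hh (Ideal.subset_span ⟨i, rfl⟩)
  let r : MvPolynomial (Fin d) K →+* MvPolynomial (Fin d ⊕ Fin d) K :=
    (rename Sum.inl : _ →ₐ[K] _).toRingHom
  have hzero : ∀ k : G, ∀ i, eval (0 : Fin d → K) (k • (X i : MvPolynomial (Fin d) K)) = 0 := by
    intro k i
    have hcoeff : coeff 0 (k • (X i : MvPolynomial (Fin d) K)) = 0 :=
      (hlin k i).coeff_eq_zero (by simp)
    rw [← hcoeff, ← constantCoeff_eq, ← eval_zero]
  -- Evaluation at `v` after acting by `k` is evaluation at the transformed point.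
  have hcomp : ∀ (k : G) (v : Fin d → K) (f : MvPolynomial (Fin d) K),
      eval v (k • f) = eval (fun i => eval v (k • (X i : MvPolynomial (Fin d) K))) f := by
    intro k v f
    have : (eval v).comp (MulSemiringAction.toRingHom G (MvPolynomial (Fin d) K) k) =
        eval (fun i => eval v (k • (X i : MvPolynomial (Fin d) K))) := by
      apply ringHom_ext
      · intro c
        simp [hC]
      · intro i
        simp
    exact congrArg (fun F => F f) this
  have hlocus : ∀ v ∈ zeroLocus K (q.comap r), v = 0 := by
    intro v hv
    have hv' : ∀ i, eval v (g • (X i : MvPolynomial (Fin d) K)) =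
        eval v (h • (X i : MvPolynomial (Fin d) K)) := by
      intro i
      have hmem : g • (X i : MvPolynomial (Fin d) K) - h • X i ∈ q.comap r := by
        rw [Ideal.mem_comap, map_sub]
        have := sub_mem (hh' i) (hg' i)
        rwa [sub_sub_sub_cancel_left] at this
      have := hv _ hmem
      rwa [aeval_eq_eval, map_sub, sub_eq_zero] at this
    -- The image of `v` under `h` is a fixed point of `h⁻¹g`.
    have hw : (fun i => eval v (h • (X i : MvPolynomial (Fin d) K))) = 0 := by
      refine hfix (h⁻¹ * g) (by rwa [ne_eq, inv_mul_eq_one, eq_comm]) _ fun i => ?_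
      rw [← hcomp, ← mul_smul, mul_inv_cancel_left, hv']
    funext i
    have h1 := hcomp h v (h⁻¹ • X i)
    rw [hw, hzero, smul_inv_smul, eval_X] at h1
    exact h1
  have hmem : ∀ f : MvPolynomial (Fin d) K, eval 0 f = 0 → rename Sum.inl f ∈ q := by
    intro f hf
    suffices f ∈ q.comap r from this
    rw [← IsPrime.vanishingIdeal_zeroLocus (K := K) (q.comap r)]
    intro v hv
    rw [hlocus v hv]
    simpa using hf
  rw [idealOfVars, Ideal.span_le]
  rintro _ ⟨i | i, rfl⟩
  · simpa using hmem (X i) (by simp)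
  · simpa using add_mem (hg' i) (hmem _ (hzero g i))

end Derksen

/-- If every non-identity element of `G` fixes only the origin, then symbolic and
ordinary powers of the Derksen ideal agree after localization at any prime different
from the homogeneous maximal ideal. -/
theorem symbolicPower_derksenIdeal_localized {K : Type*} [Field K] [IsAlgClosed K]
    (d : ℕ) (G : Type*) [Group G] [Finite G]
    [MulSemiringAction G (MvPolynomial (Fin d) K)]
    (hC : ∀ (g : G) (c : K), g • (C c : MvPolynomial (Fin d) K) = C c)
    (hlin : ∀ (g : G) (i : Fin d), (g • (X i : MvPolynomial (Fin d) K)).IsHomogeneous 1)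
    (hfix : ∀ g : G, g ≠ 1 → ∀ v : Fin d → K,
      (∀ i, eval v (g • (X i : MvPolynomial (Fin d) K)) = v i) → v = 0)
    (n : ℕ) (hn : 1 ≤ n)
    (p : Ideal (MvPolynomial (Fin d ⊕ Fin d) K)) [p.IsPrime]
    (hp : p ≠ Ideal.span (Set.range (X : Fin d ⊕ Fin d → MvPolynomial (Fin d ⊕ Fin d) K))) :
    Ideal.map (algebraMap (MvPolynomial (Fin d ⊕ Fin d) K) (Localization.AtPrime p))
        (symbolicPower (derksenIdeal K d G) n) =
      Ideal.map (algebraMap (MvPolynomial (Fin d ⊕ Fin d) K) (Localization.AtPrime p))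
        (derksenIdeal K d G ^ n) := by
  refine map_symbolicPower_iInf (fun g : G => derksenComponent K d g) isPrime_derksenComponent
    mem_pow_derksenComponent_of_mul_mem p (fun g h hg hh => ?_) n
  by_contra hgh
  exact hp (eq_idealOfVars_of_le p
    (idealOfVars_le_of_derksenComponent_le hC hlin hfix hgh p hg hh))
end
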